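/- Let P be a proper real-rational n×n transfer matrix that is negative imaginary (NI) with no poles at the origin, and let C be strictly negative imaginary (SNI). Then the positive feedback interconnection [P,C] is stable if and only if: (a) I − P(∞)C(∞) is nonsingular; (b) the largest eigenvalue of (I − P(∞)C(∞))^{-1}(P(∞)C(0) − I) is negative; and (c) the largest eigenvalue of (I − C(0)P(∞))^{-1}(C(0)P(0) − I) is negative. -/

import Mathlib

open Matrix Polynomial Filter Topology
open scoped ComplexOrder

noncomputable section

namespace NIControl

/-- Evaluate a real-rational function at a complex point (junk value at poles). -/
def evalC (f : RatFunc ℝ) (s : ℂ) : ℂ :=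
  f.eval (algebraMap ℝ ℂ) s

/-- `s` is a pole of the real-rational function `f`
(the reduced denominator vanishes at `s`). -/
def IsPoleAt (f : RatFunc ℝ) (s : ℂ) : Prop :=
  f.denom.eval₂ (algebraMap ℝ ℂ) s = 0

variable {n : ℕ}

/-- Pointwise evaluation of a real-rational transfer matrix at a complex point. -/
def evalM (G : Matrix (Fin n) (Fin n) (RatFunc ℝ)) (s : ℂ) : Matrix (Fin n) (Fin n) ℂ :=
  Matrix.of fun i j => evalC (G i j) s

/-- Pointwise evaluation of a real-rational transfer matrix at a real point. -/
def evalR (G : Matrix (Fin n) (Fin n) (RatFunc ℝ)) (x : ℝ) : Matrix (Fin n) (Fin n) ℝ :=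
  Matrix.of fun i j => (G i j).eval (RingHom.id ℝ) x

/-- Value at `s = ∞` of a proper real-rational function. -/
def atInfinity (f : RatFunc ℝ) : ℝ :=
  if f.num.degree = f.denom.degree then f.num.leadingCoeff / f.denom.leadingCoeff else 0

/-- The instantaneous gain `G(∞)` of a proper real-rational transfer matrix. -/
def evalInf (G : Matrix (Fin n) (Fin n) (RatFunc ℝ)) : Matrix (Fin n) (Fin n) ℝ :=
  Matrix.of fun i j => atInfinity (G i j)

/-- The matrix `G` has a pole at `s`. -/
def HasPole (G : Matrix (Fin n) (Fin n) (RatFunc ℝ)) (s : ℂ) : Prop :=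
  ∃ i j, IsPoleAt (G i j) s

/-- All entries of `G` are proper rational functions. -/
def Proper (G : Matrix (Fin n) (Fin n) (RatFunc ℝ)) : Prop :=
  ∀ i j, (G i j).num.degree ≤ (G i j).denom.degree

/-- All entries of `G` are strictly proper rational functions. -/
def StrictlyProper (G : Matrix (Fin n) (Fin n) (RatFunc ℝ)) : Prop :=
  ∀ i j, (G i j).num.degree < (G i j).denom.degree

/-- The pole of `G` at the origin (if any) is at most simple. -/
def NoDoubleOriginPole (G : Matrix (Fin n) (Fin n) (RatFunc ℝ)) : Prop :=
  ∀ i j, (G i j).denom.rootMultiplicity 0 ≤ 1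

/-- Membership in `RH∞`: proper and no poles in the closed right-half complex plane. -/
def MemRHinf {m : Type*} [Fintype m] (G : Matrix m m (RatFunc ℝ)) : Prop :=
  (∀ i j, (G i j).num.degree ≤ (G i j).denom.degree) ∧
  ∀ s : ℂ, 0 ≤ s.re → ∀ i j, ¬ IsPoleAt (G i j) s

/-- The point `jω` on the imaginary axis. -/
def jw (ω : ℝ) : ℂ := Complex.I * (ω : ℂ)

/-- The negative-imaginary frequency kernel `j (M − M*)`. -/
def niKer (M : Matrix (Fin n) (Fin n) ℂ) : Matrix (Fin n) (Fin n) ℂ :=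
  Complex.I • (M - Mᴴ)

/-- Negative imaginary (NI) real-rational transfer matrix. -/
def IsNI (G : Matrix (Fin n) (Fin n) (RatFunc ℝ)) : Prop :=
  Proper G ∧
  (∀ s : ℂ, 0 < s.re → ¬ HasPole G s) ∧
  (∀ ω : ℝ, 0 < ω → ¬ HasPole G (jw ω) → (niKer (evalM G (jw ω))).PosSemidef) ∧
  (∀ ω : ℝ, 0 < ω → HasPole G (jw ω) →
    ∃ R : Matrix (Fin n) (Fin n) ℂ, R.PosSemidef ∧
      Tendsto (fun s : ℂ => (s - jw ω) • Complex.I • evalM G s) (𝓝[≠] jw ω) (𝓝 R)) ∧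
  (HasPole G 0 →
    (∀ k : ℕ, 3 ≤ k → Tendsto (fun s : ℂ => s ^ k • evalM G s) (𝓝[≠] 0) (𝓝 0)) ∧
    ∃ R : Matrix (Fin n) (Fin n) ℂ, R.PosSemidef ∧
      Tendsto (fun s : ℂ => s ^ 2 • evalM G s) (𝓝[≠] 0) (𝓝 R))

/-- Strictly negative imaginary (SNI) real-rational transfer matrix. -/
def IsSNI (G : Matrix (Fin n) (Fin n) (RatFunc ℝ)) : Prop :=
  MemRHinf G ∧ ∀ ω : ℝ, 0 < ω → (niKer (evalM G (jw ω))).PosDef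

/-- Positive real (passive) real-rational transfer matrix. -/
def IsPositiveReal (G : Matrix (Fin n) (Fin n) (RatFunc ℝ)) : Prop :=
  MemRHinf G ∧ ∀ ω : ℝ, 0 ≤ ω → (evalM G (jw ω) + (evalM G (jw ω))ᴴ).PosSemidef

/-- Output strictly passive real-rational transfer matrix. -/
def IsOSP (G : Matrix (Fin n) (Fin n) (RatFunc ℝ)) : Prop :=
  MemRHinf G ∧ ∃ ε : ℝ, 0 < ε ∧ ∀ ω : ℝ, 0 ≤ ω →
    (evalM G (jw ω) + (evalM G (jw ω))ᴴ -
      (ε : ℂ) • ((evalM G (jw ω))ᴴ * evalM G (jw ω))).PosSemidef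

/-- Stability of the positive feedback interconnection `[P, C]`:
`[I; C] (I − P C)⁻¹ [I, P] ∈ RH∞`. -/
def FeedbackStable (P C : Matrix (Fin n) (Fin n) (RatFunc ℝ)) : Prop :=
  ((1 : Matrix (Fin n) (Fin n) (RatFunc ℝ)) - P * C).det ≠ 0 ∧
  MemRHinf (Matrix.fromBlocks
    (1 - P * C)⁻¹ ((1 - P * C)⁻¹ * P)
    (C * (1 - P * C)⁻¹) (C * (1 - P * C)⁻¹ * P))

/-- All eigenvalues of the complex matrix `M` are real and less than `c`. -/
def eigsRealAndLT (M : Matrix (Fin n) (Fin n) ℂ) (c : ℝ) : Prop :=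
  ∀ μ ∈ spectrum ℂ M, μ.im = 0 ∧ μ.re < c

/-- The (real) eigenvalues of the real matrix `M` are all real and its largest
eigenvalue is less than `c`. -/
def maxEigLT (M : Matrix (Fin n) (Fin n) ℝ) (c : ℝ) : Prop :=
  eigsRealAndLT (M.map (Complex.ofReal)) c

/-- Loewner order `A ≤ B` on real matrices. -/
def LoewnerLE (A B : Matrix (Fin n) (Fin n) ℝ) : Prop := (B - A).PosSemidef

/-- Strict Loewner order `A < B` on real matrices. -/
def LoewnerLT (A B : Matrix (Fin n) (Fin n) ℝ) : Prop := (B - A).PosDef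

/-! ### Rational functions: evaluation, poles, behaviour at infinity -/

lemma evalC_eq (f : RatFunc ℝ) (s : ℂ) :
    evalC f s = (f.num.map (algebraMap ℝ ℂ)).eval s / (f.denom.map (algebraMap ℝ ℂ)).eval s := by
  simp [evalC, RatFunc.eval, Polynomial.eval_map]

lemma isPoleAt_iff (f : RatFunc ℝ) (s : ℂ) :
    IsPoleAt f s ↔ (f.denom.map (algebraMap ℝ ℂ)).eval s = 0 := by
  simp [IsPoleAt, Polynomial.eval_map]

lemma denomC_ne_zero (f : RatFunc ℝ) : f.denom.map (algebraMap ℝ ℂ) ≠ 0 := by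
  rw [Ne, Polynomial.map_eq_zero]
  exact f.denom_ne_zero

/-- The subring of rational functions without pole at `s`. -/
def regAt (s : ℂ) : Subring (RatFunc ℝ) where
  carrier := {f | ¬ IsPoleAt f s}
  mul_mem' := by
    intro a b ha hb h
    have := Polynomial.eval₂_eq_zero_of_dvd_of_eval₂_eq_zero (algebraMap ℝ ℂ) s
      (RatFunc.denom_mul_dvd a b) h
    rw [Polynomial.eval₂_mul] at this
    rcases mul_eq_zero.mp this with h | h
    · exact ha h
    · exact hb h
  one_mem' := by simp [IsPoleAt]
  add_mem' := by
    intro a b ha hb h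
    have := Polynomial.eval₂_eq_zero_of_dvd_of_eval₂_eq_zero (algebraMap ℝ ℂ) s
      (RatFunc.denom_add_dvd a b) h
    rw [Polynomial.eval₂_mul] at this
    rcases mul_eq_zero.mp this with h | h
    · exact ha h
    · exact hb h
  zero_mem' := by simp [IsPoleAt]
  neg_mem' := by
    intro a ha h
    apply ha
    have h2 : (-a).denom ∣ (1 : Polynomial ℝ) * a.denom := by
      have := RatFunc.denom_mul_dvd (RatFunc.C (-1)) a
      rw [RatFunc.denom_C] at this
      simpa using this
    rw [one_mul] at h2
    exact Polynomial.eval₂_eq_zero_of_dvd_of_eval₂_eq_zero (algebraMap ℝ ℂ) s h2 h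

lemma mem_regAt {f : RatFunc ℝ} {s : ℂ} : f ∈ regAt s ↔ ¬ IsPoleAt f s := Iff.rfl

/-- Evaluation as a ring homomorphism on functions regular at `s`. -/
def evalHom (s : ℂ) : regAt s →+* ℂ where
  toFun f := evalC f.1 s
  map_one' := by simp [evalC]
  map_zero' := by simp [evalC]
  map_mul' a b := RatFunc.eval_mul _ _ a.2 b.2
  map_add' a b := RatFunc.eval_add _ _ a.2 b.2

/-- A matrix regular at `s`, with entries in `regAt s`. -/
def liftM {s : ℂ} (G : Matrix (Fin n) (Fin n) (RatFunc ℝ)) (h : ¬ HasPole G s) :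
    Matrix (Fin n) (Fin n) (regAt s) :=
  Matrix.of fun i j => ⟨G i j, fun hp => h ⟨i, j, hp⟩⟩

lemma liftM_map {s : ℂ} (G : Matrix (Fin n) (Fin n) (RatFunc ℝ)) (h : ¬ HasPole G s) :
    (regAt s).subtype.mapMatrix (liftM G h) = G := by
  ext i j; rfl

lemma liftM_eval {s : ℂ} (G : Matrix (Fin n) (Fin n) (RatFunc ℝ)) (h : ¬ HasPole G s) :
    (evalHom s).mapMatrix (liftM G h) = evalM G s := by
  ext i j; rfl

lemma lift_spec {s : ℂ} (A : Matrix (Fin n) (Fin n) (regAt s)) :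
    ¬ HasPole ((regAt s).subtype.mapMatrix A) s ∧
    evalM ((regAt s).subtype.mapMatrix A) s = (evalHom s).mapMatrix A :=
  ⟨fun ⟨i, j, h⟩ => (A i j).2 h, by ext i j; rfl⟩

lemma evalM_mul {s : ℂ} {A B : Matrix (Fin n) (Fin n) (RatFunc ℝ)}
    (hA : ¬ HasPole A s) (hB : ¬ HasPole B s) :
    ¬ HasPole (A * B) s ∧ evalM (A * B) s = evalM A s * evalM B s := by
  have := lift_spec (liftM A hA * liftM B hB)
  simpa only [map_mul, liftM_map, liftM_eval] using this

lemma evalM_one_sub {s : ℂ} {A : Matrix (Fin n) (Fin n) (RatFunc ℝ)}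
    (hA : ¬ HasPole A s) :
    ¬ HasPole (1 - A) s ∧ evalM (1 - A) s = 1 - evalM A s := by
  have := lift_spec (1 - liftM A hA)
  simpa only [map_sub, map_one, liftM_map, liftM_eval] using this

lemma evalM_one (s : ℂ) : evalM (1 : Matrix (Fin n) (Fin n) (RatFunc ℝ)) s = 1 := by
  have := lift_spec (1 : Matrix (Fin n) (Fin n) (regAt s))
  simpa only [map_one] using this.2

lemma evalC_det {s : ℂ} {A : Matrix (Fin n) (Fin n) (RatFunc ℝ)}
    (hA : ¬ HasPole A s) : evalC A.det s = (evalM A s).det := by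
  rw [← liftM_eval A hA, ← RingHom.map_det]
  conv_lhs => rw [← liftM_map A hA, ← RingHom.map_det]
  rfl

lemma evalC_diff {f : RatFunc ℝ} {s : ℂ} (h : ¬ IsPoleAt f s) :
    DifferentiableAt ℂ (evalC f) s := by
  have : evalC f = fun s => (f.num.map (algebraMap ℝ ℂ)).eval s /
      (f.denom.map (algebraMap ℝ ℂ)).eval s := funext (evalC_eq f)
  rw [this]
  rw [isPoleAt_iff] at h
  exact (Polynomial.differentiable _ _).div (Polynomial.differentiable _ _) h

lemma evalC_eq_of_reg {f : RatFunc ℝ} {s : ℂ} (h : ¬ IsPoleAt f s) :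
    evalC f s * (f.denom.map (algebraMap ℝ ℂ)).eval s = (f.num.map (algebraMap ℝ ℂ)).eval s := by
  rw [isPoleAt_iff] at h
  rw [evalC_eq, div_mul_cancel₀ _ h]

lemma finite_poles (f : RatFunc ℝ) : {s : ℂ | IsPoleAt f s}.Finite := by
  have := Polynomial.finite_setOfPred_isRoot (denomC_ne_zero f)
  refine this.subset fun s hs => ?_
  exact (isPoleAt_iff f s).1 hs

lemma finite_polesM (G : Matrix (Fin n) (Fin n) (RatFunc ℝ)) : {s : ℂ | HasPole G s}.Finite := by
  have : {s : ℂ | HasPole G s} = ⋃ i, ⋃ j, {s : ℂ | IsPoleAt (G i j) s} := by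
    ext s; simp [HasPole]
  rw [this]
  exact Set.finite_iUnion fun i => Set.finite_iUnion fun j => finite_poles _

lemma ev_not_pole (G : Matrix (Fin n) (Fin n) (RatFunc ℝ)) (a : ℂ) :
    ∀ᶠ s in 𝓝[≠] a, ¬ HasPole G s := by
  have h : ({s : ℂ | HasPole G s} \ {a})ᶜ ∈ 𝓝 a :=
    ((finite_polesM G).subset Set.sdiff_subset).isClosed.isOpen_compl.mem_nhds (by simp)
  filter_upwards [nhdsWithin_le_nhds h, self_mem_nhdsWithin] with s hs hsa hp
  exact hs ⟨hp, hsa⟩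

lemma ev_not_pole_cob (G : Matrix (Fin n) (Fin n) (RatFunc ℝ)) :
    ∀ᶠ s in Bornology.cobounded ℂ, ¬ HasPole G s := by
  exact (finite_polesM G).isBounded

/-- A rational function that is bounded along a filter finer than the punctured neighbourhood
of `a` has no pole at `a`. -/
lemma not_pole_of_bdd {f : RatFunc ℝ} {a : ℂ} {l : Filter ℂ} [l.NeBot] (hl : l ≤ 𝓝[≠] a)
    (B : ℝ) (hB : ∀ᶠ s in l, ‖evalC f s‖ ≤ B) : ¬ IsPoleAt f a := by
  intro hp
  have hd : (f.denom.map (algebraMap ℝ ℂ)).eval a = 0 := (isPoleAt_iff f a).1 hp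
  have hn : (f.num.map (algebraMap ℝ ℂ)).eval a ≠ 0 := by
    intro h0
    obtain ⟨u, v, huv⟩ := f.isCoprime_num_denom
    have := congrArg (fun p => (p.map (algebraMap ℝ ℂ)).eval a) huv
    simp only [Polynomial.map_add, Polynomial.map_mul, Polynomial.eval_add, Polynomial.eval_mul,
      h0, hd, Polynomial.map_one, Polynomial.eval_one] at this
    simp at this
  have hnp : ∀ᶠ s in l, ¬ IsPoleAt f s := by
    have := ev_not_pole (n := 1) (fun _ _ => f) a
    filter_upwards [hl this] with s hs h
    exact hs ⟨0, 0, h⟩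
  have hla : l ≤ 𝓝 a := hl.trans nhdsWithin_le_nhds
  have t1 : Tendsto (fun s => (f.num.map (algebraMap ℝ ℂ)).eval s) l
      (𝓝 ((f.num.map (algebraMap ℝ ℂ)).eval a)) :=
    ((Polynomial.continuous _).tendsto a).mono_left hla
  have t2 : Tendsto (fun s => (f.denom.map (algebraMap ℝ ℂ)).eval s) l (𝓝 0) := by
    have := ((Polynomial.continuous (f.denom.map (algebraMap ℝ ℂ))).tendsto a).mono_left hla
    rwa [hd] at this
  have t3 : Tendsto (fun s => evalC f s * (f.denom.map (algebraMap ℝ ℂ)).eval s) l (𝓝 0) := by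
    rw [tendsto_zero_iff_norm_tendsto_zero]
    have t4 : Tendsto (fun s => B * ‖(f.denom.map (algebraMap ℝ ℂ)).eval s‖) l (𝓝 0) := by
      simpa using (t2.norm).const_mul B
    refine squeeze_zero' (Eventually.of_forall fun _ => norm_nonneg _) ?_ t4
    filter_upwards [hB] with s hs
    rw [norm_mul]
    gcongr
  have t5 : Tendsto (fun s => (f.num.map (algebraMap ℝ ℂ)).eval s) l (𝓝 0) := by
    refine t3.congr' ?_
    filter_upwards [hnp] with s hs
    exact evalC_eq_of_reg hs
  exact hn (tendsto_nhds_unique t1 t5)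

lemma evalC_ofReal (f : RatFunc ℝ) (x : ℝ) :
    evalC f (x : ℂ) = ((f.num.eval x / f.denom.eval x : ℝ) : ℂ) := by
  have h : ∀ p : Polynomial ℝ, (p.map (algebraMap ℝ ℂ)).eval (x : ℂ) = ((p.eval x : ℝ) : ℂ) := by
    intro p
    rw [Polynomial.eval_map]
    exact Polynomial.eval₂_at_apply (algebraMap ℝ ℂ) x
  rw [evalC_eq, h, h]; push_cast; rfl

lemma proper_of_bdd {f : RatFunc ℝ} (B : ℝ)
    (hB : ∀ᶠ x : ℝ in atTop, ‖evalC f (x : ℂ)‖ ≤ B) : f.num.degree ≤ f.denom.degree := by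
  by_contra h
  push Not at h
  have := Polynomial.abs_div_tendsto_atTop_atTop_of_degree_gt f.num f.denom h f.denom_ne_zero
  have h2 := this.eventually_gt_atTop B
  obtain ⟨x, hx1, hx2⟩ := (hB.and h2).exists
  rw [evalC_ofReal, Complex.norm_real, Real.norm_eq_abs] at hx1
  linarith

lemma tendsto_atInfinity {f : RatFunc ℝ} (h : f.num.degree ≤ f.denom.degree) :
    Tendsto (evalC f) (Bornology.cobounded ℂ) (𝓝 (atInfinity f : ℂ)) := by
  have hfe : evalC f = fun s => (f.num.map (algebraMap ℝ ℂ)).eval s /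
      (f.denom.map (algebraMap ℝ ℂ)).eval s := funext (evalC_eq f)
  rw [hfe]
  unfold atInfinity
  split_ifs with he
  · have e1 := Polynomial.isEquivalent_cobounded_leading_monomial
      (P := f.num.map (algebraMap ℝ ℂ))
    have e2 := Polynomial.isEquivalent_cobounded_leading_monomial
      (P := f.denom.map (algebraMap ℝ ℂ))
    have e3 := e1.div e2
    refine e3.symm.tendsto_nhds ?_
    refine Tendsto.congr' ?_ tendsto_const_nhds
    have hnd : f.num.natDegree = f.denom.natDegree := Polynomial.natDegree_eq_of_degree_eq he
    have hne : ∀ᶠ s : ℂ in Bornology.cobounded ℂ, s ≠ 0 :=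
      Bornology.isBounded_singleton (x := (0:ℂ))
    filter_upwards [hne] with s hs
    simp only [Pi.div_apply, Polynomial.natDegree_map, Polynomial.leadingCoeff_map, hnd]
    rw [mul_div_mul_right _ _ (pow_ne_zero _ hs)]
    simp
  · have hlt := lt_of_le_of_ne h he
    have := Polynomial.isLittleO_cobounded_of_degree_lt (R := ℂ)
      (P := f.num.map (algebraMap ℝ ℂ)) (Q := f.denom.map (algebraMap ℝ ℂ))
      (by simpa [Polynomial.degree_map] using hlt)
    simpa using this.tendsto_div_nhds_zero

lemma evalC_conj (f : RatFunc ℝ) (s : ℂ) :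
    evalC f ((starRingEnd ℂ) s) = (starRingEnd ℂ) (evalC f s) := by
  have h : ∀ p : Polynomial ℝ, (p.map (algebraMap ℝ ℂ)).eval ((starRingEnd ℂ) s)
      = (starRingEnd ℂ) ((p.map (algebraMap ℝ ℂ)).eval s) := by
    intro p
    rw [Polynomial.eval_map, Polynomial.eval_map, Polynomial.hom_eval₂]
    congr 1
    ext x
    simp
  rw [evalC_eq, evalC_eq, h, h, map_div₀]

lemma isPoleAt_conj (f : RatFunc ℝ) (s : ℂ) :
    IsPoleAt f ((starRingEnd ℂ) s) ↔ IsPoleAt f s := by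
  have h : ∀ p : Polynomial ℝ, (p.map (algebraMap ℝ ℂ)).eval ((starRingEnd ℂ) s)
      = (starRingEnd ℂ) ((p.map (algebraMap ℝ ℂ)).eval s) := by
    intro p
    rw [Polynomial.eval_map, Polynomial.eval_map, Polynomial.hom_eval₂]
    congr 1
    ext x
    simp
  rw [isPoleAt_iff, isPoleAt_iff, h]
  simp

lemma evalR_map (G : Matrix (Fin n) (Fin n) (RatFunc ℝ)) :
    (evalR G 0).map Complex.ofReal = evalM G 0 := by
  ext i j
  have := evalC_ofReal (G i j) 0
  simp only [Matrix.map_apply, evalR, evalM, Matrix.of_apply]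
  rw [← Complex.ofReal_zero, this]
  simp [RatFunc.eval, ← Polynomial.coeff_zero_eq_eval_zero]

lemma evalM_tendsto_inf {G : Matrix (Fin n) (Fin n) (RatFunc ℝ)} (h : Proper G) :
    Tendsto (evalM G) (Bornology.cobounded ℂ) (𝓝 ((evalInf G).map Complex.ofReal)) := by
  refine tendsto_pi_nhds.2 fun i => tendsto_pi_nhds.2 fun j => ?_
  exact tendsto_atInfinity (h i j)

lemma evalM_continuousAt {G : Matrix (Fin n) (Fin n) (RatFunc ℝ)} {s : ℂ} (h : ¬ HasPole G s) :
    ContinuousAt (evalM G) s := by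
  refine tendsto_pi_nhds.2 fun i => tendsto_pi_nhds.2 fun j => ?_
  exact (evalC_diff fun hp => h ⟨i, j, hp⟩).continuousAt

lemma hasPole_conj (G : Matrix (Fin n) (Fin n) (RatFunc ℝ)) (s : ℂ) :
    HasPole G ((starRingEnd ℂ) s) ↔ HasPole G s := by
  simp [HasPole, isPoleAt_conj]

lemma tendsto_ofReal_cob : Tendsto (fun x : ℝ => (x : ℂ)) atTop (Bornology.cobounded ℂ) := by
  rw [← tendsto_norm_atTop_iff_cobounded]
  simp only [Complex.norm_real]
  exact tendsto_norm_atTop_atTop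

lemma tendsto_jw_cob : Tendsto jw atTop (Bornology.cobounded ℂ) := by
  rw [← tendsto_norm_atTop_iff_cobounded]
  simp only [jw, norm_mul, Complex.norm_I, one_mul, Complex.norm_real]
  exact tendsto_norm_atTop_atTop

/-! ### Complex analysis: homotopy principle, minimum principle for the real part -/

lemma homotopy_ball (c : ℂ) (R : ℝ) (hR : 0 < R) (d : ℝ → ℂ → ℂ)
    (hc : ContinuousOn (Function.uncurry d) (Set.Icc 0 1 ×ˢ Metric.closedBall c R))
    (hd : ∀ t ∈ Set.Icc (0 : ℝ) 1, DifferentiableOn ℂ (d t) (Metric.ball c R))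
    (hs : ∀ t ∈ Set.Icc (0 : ℝ) 1, ∀ z ∈ Metric.sphere c R, d t z ≠ 0)
    (h0 : ∀ z ∈ Metric.closedBall c R, d 0 z ≠ 0) :
    ∀ z ∈ Metric.closedBall c R, d 1 z ≠ 0 := by
  have hcpt : IsCompact (Set.Icc (0 : ℝ) 1 ×ˢ Metric.closedBall c R) :=
    isCompact_Icc.prod (isCompact_closedBall c R)
  have hcpt2 : IsCompact (Set.Icc (0 : ℝ) 1 ×ˢ Metric.sphere c R) :=
    isCompact_Icc.prod (isCompact_sphere c R)
  have hsub : Set.Icc (0 : ℝ) 1 ×ˢ Metric.sphere c R ⊆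
      Set.Icc (0 : ℝ) 1 ×ˢ Metric.closedBall c R :=
    Set.prod_mono le_rfl Metric.sphere_subset_closedBall
  have hne : (Set.Icc (0 : ℝ) 1 ×ˢ Metric.sphere c R).Nonempty :=
    Set.Nonempty.prod ⟨0, by simp⟩ (NormedSpace.sphere_nonempty.2 hR.le)
  obtain ⟨p0, hp0, hmin⟩ := hcpt2.exists_isMinOn hne (hc.mono hsub).norm
  set δ := ‖Function.uncurry d p0‖ with hδ
  have hδpos : 0 < δ := norm_pos_iff.2 (hs p0.1 hp0.1 p0.2 hp0.2)
  have hδle : ∀ t ∈ Set.Icc (0 : ℝ) 1, ∀ z ∈ Metric.sphere c R, δ ≤ ‖d t z‖ := by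
    intro t ht z hz
    exact hmin (a := (t, z)) ⟨ht, hz⟩
  have hct : ∀ t ∈ Set.Icc (0 : ℝ) 1, ContinuousOn (d t) (Metric.closedBall c R) := by
    intro t ht
    have : ContinuousOn (fun z => Function.uncurry d (t, z)) (Metric.closedBall c R) :=
      hc.comp (by fun_prop) (fun z hz => ⟨ht, hz⟩)
    exact this
  have key : ∀ t ∈ Set.Icc (0 : ℝ) 1, (∀ z ∈ Metric.closedBall c R, d t z ≠ 0) →
      ∀ z ∈ Metric.closedBall c R, δ ≤ ‖d t z‖ := by
    intro t ht hnz z hz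
    have hdc : DiffContOnCl ℂ (fun z => (d t z)⁻¹) (Metric.ball c R) := by
      refine ⟨(hd t ht).inv fun z hz => hnz z (Metric.ball_subset_closedBall hz), ?_⟩
      rw [closure_ball c hR.ne']
      exact (hct t ht).inv₀ hnz
    have := Complex.norm_le_of_forall_mem_frontier_norm_le (Metric.isBounded_ball (x := c) (r := R))
      hdc (C := δ⁻¹) (by
        intro w hw
        rw [frontier_ball c hR.ne'] at hw
        rw [norm_inv]
        exact inv_anti₀ hδpos (hδle t ht w hw)) (z := z) (by rwa [closure_ball c hR.ne'])
    rw [norm_inv] at this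
    exact (inv_le_inv₀ (norm_pos_iff.2 (hnz z hz)) hδpos).1 this
  have huc := hcpt.uniformContinuousOn_of_continuous hc
  rw [Metric.uniformContinuousOn_iff] at huc
  obtain ⟨η, hη, huc⟩ := huc δ hδpos
  obtain ⟨N, hN⟩ := exists_nat_one_div_lt hη
  have hN1 : (0 : ℝ) < (N : ℝ) + 1 := by positivity
  have ind : ∀ k : ℕ, k ≤ N + 1 → ∀ z ∈ Metric.closedBall c R, d ((k : ℝ) / (N + 1)) z ≠ 0 := by
    intro k
    induction k with
    | zero => intro _ z hz; simpa using h0 z hz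
    | succ k ih =>
      intro hk z hz
      have hk' : (k : ℝ) + 1 ≤ N + 1 := by exact_mod_cast hk
      have m1 : (k : ℝ) / (N + 1) ∈ Set.Icc (0 : ℝ) 1 :=
        ⟨by positivity, by rw [div_le_one hN1]; linarith⟩
      have m2 : ((k + 1 : ℕ) : ℝ) / (N + 1) ∈ Set.Icc (0 : ℝ) 1 :=
        ⟨by positivity, by rw [div_le_one hN1]; push_cast; linarith⟩
      have hge := key _ m1 (ih (by omega)) z hz
      have hdist := huc ((k : ℝ) / (N + 1), z) ⟨m1, hz⟩ (((k + 1 : ℕ) : ℝ) / (N + 1), z) ⟨m2, hz⟩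
        (by
          rw [Prod.dist_eq]
          simp only [dist_self, Real.dist_eq]
          rw [max_eq_left (abs_nonneg _), ← sub_div]
          push_cast
          rw [abs_div, abs_of_pos hN1]
          simpa using hN)
      intro h
      simp only [Function.uncurry] at hdist
      rw [h, dist_zero_right] at hdist
      linarith
  intro z hz
  have := ind (N + 1) le_rfl z hz
  push_cast at this
  rwa [div_self hN1.ne'] at this

lemma pr_abs (k : ℂ → ℂ) (Z : Finset ℂ) (hZ : ∀ a ∈ Z, a.re = 0)
    (hd : ∀ s : ℂ, 0 < s.re → DifferentiableAt ℂ k s)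
    (hc : ∀ s : ℂ, s.re = 0 → s ∉ Z → ContinuousAt k s)
    (hb : ∀ s : ℂ, s.re = 0 → s ∉ Z → 0 ≤ (k s).re)
    (hC : ∃ C : ℝ, ∀ s : ℂ, 0 < s.re → -C ≤ (k s).re) :
    ∀ s : ℂ, 0 < s.re → 0 ≤ (k s).re := by
  obtain ⟨C, hC⟩ := hC
  have hC0 : ∀ s : ℂ, 0 ≤ s.re → s ∉ Z → -C ≤ (k s).re ∨ 0 ≤ (k s).re := by
    intro s hs hsZ
    rcases hs.eq_or_lt with h | h
    · exact Or.inr (hb s h.symm hsZ)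
    · exact Or.inl (hC s h)
  set q : ℂ → ℂ := fun s => ∏ a ∈ Z, (s - a) / (s - a + 1) with hq
  have hden : ∀ a ∈ Z, ∀ s : ℂ, 0 ≤ s.re → s - a + 1 ≠ 0 := by
    intro a ha s hs h
    have := congrArg Complex.re h
    simp [hZ a ha] at this
    linarith
  have hqle : ∀ s : ℂ, 0 ≤ s.re → ‖q s‖ ≤ 1 := by
    intro s hs
    rw [hq]
    simp only [norm_prod]
    refine Finset.prod_le_one (fun _ _ => norm_nonneg _) fun a ha => ?_
    rw [norm_div, div_le_one (norm_pos_iff.2 (hden a ha s hs))]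
    rw [← sq_le_sq₀ (norm_nonneg _) (norm_nonneg _), Complex.sq_norm, Complex.sq_norm,
      Complex.normSq_apply, Complex.normSq_apply]
    simp [hZ a ha]
    nlinarith
  have hqd : ∀ s : ℂ, 0 ≤ s.re → DifferentiableAt ℂ q s := by
    intro s hs
    have : q = fun s => ∏ a ∈ Z, (fun s => (s - a) / (s - a + 1)) s := rfl
    rw [this]
    apply DifferentiableAt.fun_finsetProd
    intro a ha
    exact DifferentiableAt.div (by fun_prop) (by fun_prop) (hden a ha s hs)
  have hqz : ∀ a ∈ Z, q a = 0 := by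
    intro a ha
    exact Finset.prod_eq_zero ha (by simp)
  have hqnz : ∀ s : ℂ, 0 < s.re → q s ≠ 0 := by
    intro s hs
    refine Finset.prod_ne_zero_iff.2 fun a ha => div_ne_zero ?_ (hden a ha s hs.le)
    intro h
    have := congrArg Complex.re h
    simp [hZ a ha] at this
    linarith
  have hnotZ : ∀ s : ℂ, 0 < s.re → s ∉ Z := fun s hs h => by
    have := hZ s h; linarith
  have hZcl : IsOpen ((Z : Set ℂ)ᶜ) := Z.finite_toSet.isClosed.isOpen_compl
  have main : ∀ N : ℕ, ∀ s : ℂ, 0 < s.re →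
      ‖Complex.exp (-(N : ℂ) * k s) * q s‖ ≤ 1 := by
    intro N
    classical
    set f : ℂ → ℂ := fun s => if s ∈ Z then 0 else Complex.exp (-(N : ℂ) * k s) * q s with hf
    have hfb : ∀ s : ℂ, 0 ≤ s.re → ‖f s‖ ≤ Real.exp (N * |C|) * ‖q s‖ := by
      intro s hs
      by_cases hsZ : s ∈ Z
      · simp only [hf, hsZ, if_true, norm_zero]; positivity
      · simp only [hf, hsZ, if_false, norm_mul, Complex.norm_exp]
        gcongr
        have : (-(N : ℂ) * k s).re = -(N * (k s).re) := by simp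
        rw [this, ← mul_neg]
        refine mul_le_mul_of_nonneg_left ?_ (Nat.cast_nonneg N)
        rcases hC0 s hs hsZ with h | h
        · linarith [le_abs_self C]
        · linarith [abs_nonneg C]
    have hfb1 : ∀ s : ℂ, 0 ≤ s.re → ‖f s‖ ≤ Real.exp (N * |C|) := by
      intro s hs
      refine (hfb s hs).trans ?_
      have := hqle s hs
      have h2 := Real.exp_pos (N * |C|)
      nlinarith
    have hev : ∀ s : ℂ, s ∉ Z → f =ᶠ[𝓝 s] fun s => Complex.exp (-(N : ℂ) * k s) * q s := by
      intro s hs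
      filter_upwards [hZcl.mem_nhds (by simpa using hs)] with w hw
      have : w ∉ Z := by simpa using hw
      simp [hf, this]
    have hdc : DiffContOnCl ℂ f {z | 0 < z.re} := by
      constructor
      · intro s hs
        refine DifferentiableAt.differentiableWithinAt ?_
        rw [(hev s (hnotZ s hs)).differentiableAt_iff]
        exact (((hd s hs).const_mul _).cexp).mul (hqd s (le_of_lt hs))
      · rw [Complex.closure_setOfPred_lt_re]
        intro s hs
        have hs : 0 ≤ s.re := hs
        by_cases hsZ : s ∈ Z
        · have hfs : f s = 0 := by simp [hf, hsZ]
          rw [ContinuousWithinAt, hfs, tendsto_zero_iff_norm_tendsto_zero]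
          have t : Tendsto (fun w => Real.exp (N * |C|) * ‖q w‖) (𝓝[{z | 0 ≤ z.re}] s) (𝓝 0) := by
            have := ((hqd s hs).continuousAt.norm.tendsto.const_mul (Real.exp (N * |C|)))
            rw [hqz s hsZ, norm_zero, mul_zero] at this
            exact this.mono_left nhdsWithin_le_nhds
          refine squeeze_zero' (Eventually.of_forall fun _ => norm_nonneg _) ?_ t
          filter_upwards [self_mem_nhdsWithin] with w hw
          exact hfb w hw
        · refine ContinuousAt.continuousWithinAt ?_
          rw [continuousAt_congr (hev s hsZ)]
          have hk : ContinuousAt k s := by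
            rcases hs.eq_or_lt with h | h
            · exact hc s h.symm hsZ
            · exact (hd s h).continuousAt
          exact (((hk.const_mul _).cexp)).mul (hqd s hs).continuousAt
    have hexp : ∃ c < (2 : ℝ), ∃ B, f =O[Bornology.cobounded ℂ ⊓ 𝓟 {z | 0 < z.re}]
        fun z => Real.exp (B * ‖z‖ ^ c) := by
      refine ⟨0, by norm_num, 0, ?_⟩
      refine Asymptotics.IsBigO.of_bound (Real.exp (N * |C|)) ?_
      rw [eventually_inf_principal]
      refine Eventually.of_forall fun s hs => ?_
      simpa using hfb1 s (le_of_lt hs)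
    have hre : IsBoundedUnder (· ≤ ·) atTop fun x : ℝ => ‖f x‖ := by
      refine ⟨Real.exp (N * |C|), ?_⟩
      rw [eventually_map]
      filter_upwards [eventually_ge_atTop 0] with x hx
      exact hfb1 x (by simpa using hx)
    have him : ∀ x : ℝ, ‖f (x * Complex.I)‖ ≤ 1 := by
      intro x
      by_cases hsZ : (x * Complex.I : ℂ) ∈ Z
      · simp [hf, hsZ]
      · have hx0 : (x * Complex.I : ℂ).re = 0 := by simp
        simp only [hf, hsZ, if_false, norm_mul, Complex.norm_exp]
        have h1 := hb _ hx0 hsZ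
        have h2 := hqle (x * Complex.I) hx0.ge
        have h3 : Real.exp (-(N : ℂ) * k (x * Complex.I)).re ≤ 1 := by
          rw [Real.exp_le_one_iff]
          have : (-(N : ℂ) * k (x * Complex.I)).re = -(N * (k (x * Complex.I)).re) := by simp
          rw [this]
          have : (0:ℝ) ≤ N * (k (x * Complex.I)).re := mul_nonneg (Nat.cast_nonneg N) h1
          linarith
        exact mul_le_one₀ h3 (norm_nonneg _) h2
    intro s hs
    have := PhragmenLindelof.right_half_plane_of_bounded_on_real hdc hexp hre him hs.le
    simpa [hf, hnotZ s hs] using this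
  intro s hs
  by_contra hneg
  push Not at hneg
  have hqpos : 0 < ‖q s‖ := norm_pos_iff.2 (hqnz s hs)
  -- choose N large
  obtain ⟨N, hN⟩ := exists_nat_gt (‖q s‖⁻¹ / (-(k s).re))
  have h1 := main N s hs
  rw [norm_mul, Complex.norm_exp] at h1
  have h2 : (-(N : ℂ) * k s).re = N * (-(k s).re) := by simp
  rw [h2] at h1
  rw [div_lt_iff₀ (by linarith)] at hN
  have h3 := Real.add_one_le_exp (N * (-(k s).re))
  have h4 : ‖q s‖⁻¹ * ‖q s‖ = 1 := inv_mul_cancel₀ hqpos.ne'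
  nlinarith

/-- Local lower bound near a simple boundary pole with nonnegative residue. -/
lemma local_pole_bound (k : ℂ → ℂ) (a : ℂ) (ha : a.re = 0) (r : ℝ) (hr : 0 ≤ r)
    (hd : ∀ᶠ s in 𝓝[≠] a, DifferentiableAt ℂ k s)
    (ht : Tendsto (fun s => (s - a) * k s) (𝓝[≠] a) (𝓝 (r : ℂ))) :
    ∃ C : ℝ, ∀ᶠ s in 𝓝 a, 0 < s.re → -C ≤ (k s).re := by
  classical
  set h : ℂ → ℂ := Function.update (fun s => (s - a) * k s) a r with hh
  have hcont : ContinuousAt h a := by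
    rw [hh, continuousAt_update_same]
    exact ht
  have hdiff : ∀ᶠ s in 𝓝[≠] a, DifferentiableAt ℂ h s := by
    filter_upwards [hd, self_mem_nhdsWithin] with s hs hsa
    have : h =ᶠ[𝓝 s] fun s => (s - a) * k s := by
      filter_upwards [isOpen_compl_singleton.mem_nhds hsa] with w hw
      exact Function.update_of_ne hw _ _
    rw [this.differentiableAt_iff]
    fun_prop
  have han := Complex.analyticAt_of_differentiable_on_punctured_nhds_of_continuousAt hdiff hcont
  have hO := han.differentiableAt.isBigO_sub
  obtain ⟨C, hC⟩ := hO.bound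
  refine ⟨C, ?_⟩
  filter_upwards [hC] with s hs hre
  have hsa : s - a ≠ 0 := by
    intro h
    have := congrArg Complex.re h
    simp [ha] at this
    linarith
  have hsa' : s ≠ a := sub_ne_zero.1 hsa
  have h1 : h s = (s - a) * k s := Function.update_of_ne hsa' _ _
  have h2 : h a = r := Function.update_self _ _ _
  rw [h1, h2] at hs
  have h3 : k s = r / (s - a) + ((s - a) * k s - r) / (s - a) := by
    field_simp
    ring
  have h4 : ‖((s - a) * k s - r) / (s - a)‖ ≤ C := by
    rw [norm_div, div_le_iff₀ (norm_pos_iff.2 hsa)]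
    exact hs
  have h5 : 0 ≤ ((r : ℂ) / (s - a)).re := by
    rw [div_eq_mul_inv, Complex.re_ofReal_mul, Complex.inv_re]
    have : 0 ≤ (s - a).re := by simp [ha]; exact hre.le
    have := Complex.normSq_nonneg (s - a)
    positivity
  have h6 := (abs_le.1 ((Complex.abs_re_le_norm _).trans h4)).1
  rw [h3, Complex.add_re]
  linarith

/-- Scalar negative imaginary function: `(g(0) - g(s))/s` has nonnegative real part on the open
right half plane. -/
lemma scalar_ni (g : ℂ → ℂ) (ginf : ℂ) (Z : Finset ℂ) (hZ : ∀ a ∈ Z, a.re = 0) (h0Z : (0:ℂ) ∉ Z)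
    (hd : ∀ s : ℂ, 0 ≤ s.re → s ∉ Z → DifferentiableAt ℂ g s)
    (hinf : Tendsto g (Bornology.cobounded ℂ) (𝓝 ginf))
    (hne : ∀ a : ℂ, ∀ᶠ s in 𝓝[≠] a, DifferentiableAt ℂ g s)
    (him : ∀ ω : ℝ, jw ω ∉ Z → ω * (g (jw ω)).im ≤ 0) (him0 : (g 0).im = 0)
    (hres : ∀ a ∈ Z, ∃ r : ℝ, 0 ≤ r ∧
      Tendsto (fun s => (s - a) * g s) (𝓝[≠] a) (𝓝 (-(r * a)))) :
    ∀ s : ℂ, 0 < s.re → 0 ≤ ((g 0 - g s) / s).re := by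
  classical
  have ne0 : ∀ s : ℂ, 0 < s.re → s ≠ 0 := by
    rintro s hs rfl; simp at hs
  refine pr_abs (fun s => (g 0 - g s) / s) (insert 0 Z) ?_ ?_ ?_ ?_ ?_
  · intro a ha
    rcases Finset.mem_insert.1 ha with rfl | ha
    · simp
    · exact hZ a ha
  · intro s hs
    have := hd s hs.le (fun h => by have := hZ s h; linarith)
    exact DifferentiableAt.div (by fun_prop) (by fun_prop) (ne0 s hs)
  · intro s hs hsZ
    rw [Finset.mem_insert, not_or] at hsZ
    have := (hd s hs.ge hsZ.2).continuousAt
    exact ContinuousAt.div (by fun_prop) (by fun_prop) hsZ.1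
  · intro s hs hsZ
    rw [Finset.mem_insert, not_or] at hsZ
    have hsj : s = jw s.im := by
      apply Complex.ext <;> simp [jw, hs]
    have h1 := him s.im (by rw [← hsj]; exact hsZ.2)
    rw [← hsj] at h1
    have hn : 0 < Complex.normSq s := Complex.normSq_pos.2 hsZ.1
    rw [Complex.div_re, hs]
    simp only [Complex.sub_im, him0, mul_zero, zero_div, zero_add]
    apply div_nonneg _ hn.le
    linarith
  · -- global lower bound
    have hfar : ∃ R : ℝ, ∀ s : ℂ, R ≤ ‖s‖ → ‖(g 0 - g s) / s‖ ≤ 1 := by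
      have t : Tendsto (fun s => (g 0 - g s) / s) (Bornology.cobounded ℂ) (𝓝 0) := by
        have := (hinf.const_sub (g 0)).mul (tendsto_inv₀_cobounded (α := ℂ))
        simpa [div_eq_mul_inv] using this
      have := (t.norm.eventually (ge_mem_nhds (by simp : ‖(0:ℂ)‖ < 1)))
      rw [← comap_norm_atTop, eventually_comap] at this
      obtain ⟨R, hR⟩ := eventually_atTop.1 this
      exact ⟨R, fun s hs => hR _ hs s rfl⟩
    obtain ⟨R, hR⟩ := hfar
    have hcpt : IsCompact (Metric.closedBall (0:ℂ) R ∩ {s | 0 ≤ s.re}) :=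
      (isCompact_closedBall _ _).inter_right (isClosed_le continuous_const Complex.continuous_re)
    have hloc : ∃ C : ℝ, ∀ s ∈ Metric.closedBall (0:ℂ) R ∩ {s | 0 ≤ s.re}, 0 < s.re →
        -C ≤ ((g 0 - g s) / s).re := by
      refine hcpt.induction_on (p := fun S => ∃ C : ℝ, ∀ s ∈ S, 0 < s.re →
        -C ≤ ((g 0 - g s) / s).re) ⟨0, by simp⟩ ?_ ?_ ?_
      · rintro S T hST ⟨C, hC⟩
        exact ⟨C, fun s hs => hC s (hST hs)⟩
      · rintro S T ⟨C, hC⟩ ⟨D, hD⟩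
        refine ⟨max C D, ?_⟩
        rintro s (hs | hs) h
        · have := hC s hs h; linarith [le_max_left C D]
        · have := hD s hs h; linarith [le_max_right C D]
      · rintro a ⟨-, ha⟩
        have ha : 0 ≤ a.re := ha
        have hl : ∃ C : ℝ, ∀ᶠ s in 𝓝 a, 0 < s.re → -C ≤ ((g 0 - g s) / s).re := by
          by_cases haZ : a ∈ Z
          · obtain ⟨r, hr, hrt⟩ := hres a haZ
            have ha0 : a ≠ 0 := by rintro rfl; exact h0Z haZ
            refine local_pole_bound _ a (hZ a haZ) r hr ?_ ?_
            · filter_upwards [hne a, nhdsWithin_le_nhds (isOpen_ne.mem_nhds ha0)] with s hs hs0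
              exact DifferentiableAt.div (by fun_prop) (by fun_prop) hs0
            · have t1 : Tendsto (fun s : ℂ => s) (𝓝[≠] a) (𝓝 a) := nhdsWithin_le_nhds
              have t2 : Tendsto (fun s : ℂ => ((s - a) * g 0 - (s - a) * g s) / s) (𝓝[≠] a)
                  (𝓝 (((a - a) * g 0 - (-(r * a))) / a)) :=
                (((t1.sub_const a).mul_const _).sub hrt).div t1 ha0
              have e : ((a - a) * g 0 - (-(r * a))) / a = (r : ℂ) := by
                field_simp
                ring
              rw [e] at t2
              refine t2.congr fun s => ?_
              ring
          · by_cases ha0 : a = 0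
            · subst ha0
              refine local_pole_bound _ 0 (by simp) 0 le_rfl ?_ ?_
              · filter_upwards [hne 0, self_mem_nhdsWithin] with s hs hs0
                exact DifferentiableAt.div (by fun_prop) (by fun_prop) hs0
              · have hg0 := (hd 0 (by simp) h0Z).continuousAt
                have t2 : Tendsto (fun s : ℂ => g 0 - g s) (𝓝[≠] 0) (𝓝 (g 0 - g 0)) :=
                  (hg0.tendsto.const_sub (g 0)).mono_left nhdsWithin_le_nhds
                rw [sub_self] at t2
                rw [Complex.ofReal_zero]
                refine t2.congr' ?_
                filter_upwards [self_mem_nhdsWithin] with s hs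
                have : s ≠ 0 := hs
                field_simp
                simp
            · have hga := (hd a ha haZ).continuousAt
              have hk : ContinuousAt (fun s => ((g 0 - g s) / s).re) a :=
                Complex.continuous_re.continuousAt.comp
                  (ContinuousAt.div (by fun_prop) (by fun_prop) ha0)
              refine ⟨-(((g 0 - g a) / a).re - 1), ?_⟩
              filter_upwards [hk.eventually (lt_mem_nhds (sub_one_lt _))] with s hs _
              rw [neg_neg]
              exact hs.le
        obtain ⟨C, hC⟩ := hl
        exact ⟨_, nhdsWithin_le_nhds hC, C, fun s hs => hs⟩
    obtain ⟨C, hC⟩ := hloc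
    refine ⟨max C 1, fun s hs => ?_⟩
    rcases le_total R ‖s‖ with h | h
    · have := (abs_le.1 ((Complex.abs_re_le_norm _).trans (hR s h))).1
      linarith [le_max_right C 1]
    · have := hC s ⟨by simpa using h, hs.le⟩ hs
      linarith [le_max_left C 1]

/-- Quadratic form. -/
def qf (M : Matrix (Fin n) (Fin n) ℂ) (v : Fin n → ℂ) : ℂ := star v ⬝ᵥ (M *ᵥ v)

lemma qf_continuous (v : Fin n → ℂ) : Continuous (fun M : Matrix (Fin n) (Fin n) ℂ => qf M v) := by
  unfold qf
  fun_prop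

lemma qf_smul (c : ℂ) (M : Matrix (Fin n) (Fin n) ℂ) (v : Fin n → ℂ) : qf (c • M) v = c * qf M v := by
  simp [qf, Matrix.smul_mulVec]

lemma qf_sub (M N : Matrix (Fin n) (Fin n) ℂ) (v : Fin n → ℂ) : qf (M - N) v = qf M v - qf N v := by
  simp [qf, Matrix.sub_mulVec]

lemma qf_add (M N : Matrix (Fin n) (Fin n) ℂ) (v : Fin n → ℂ) : qf (M + N) v = qf M v + qf N v := by
  simp [qf, Matrix.add_mulVec]

lemma qf_conjTranspose (M : Matrix (Fin n) (Fin n) ℂ) (v : Fin n → ℂ) :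
    qf Mᴴ v = star (qf M v) := by
  unfold qf
  rw [Matrix.star_dotProduct, Matrix.star_mulVec, Matrix.conjTranspose_conjTranspose,
    Matrix.dotProduct_mulVec]

lemma qf_niKer (M : Matrix (Fin n) (Fin n) ℂ) (v : Fin n → ℂ) :
    qf (niKer M) v = ((-2 * (qf M v).im : ℝ) : ℂ) := by
  unfold niKer
  rw [qf_smul, qf_sub, qf_conjTranspose]
  apply Complex.ext
  · simp; ring
  · simp

lemma qf_im_nonpos {M : Matrix (Fin n) (Fin n) ℂ} (h : (niKer M).PosSemidef) (v : Fin n → ℂ) :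
    (qf M v).im ≤ 0 := by
  have := h.dotProduct_mulVec_nonneg v
  change 0 ≤ qf (niKer M) v at this
  rw [qf_niKer] at this
  have := Complex.zero_le_real.1 this
  linarith

lemma qf_im_neg {M : Matrix (Fin n) (Fin n) ℂ} (h : (niKer M).PosDef) {v : Fin n → ℂ} (hv : v ≠ 0) :
    (qf M v).im < 0 := by
  have := h.dotProduct_mulVec_pos hv
  change 0 < qf (niKer M) v at this
  rw [qf_niKer] at this
  have := Complex.zero_lt_real.1 this
  linarith

lemma qf_map_star (M : Matrix (Fin n) (Fin n) ℂ) (v : Fin n → ℂ) :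
    qf (M.map star) v = star (qf M (star v)) := by
  simp [qf, dotProduct, mulVec, Finset.mul_sum]

lemma evalM_conj (G : Matrix (Fin n) (Fin n) (RatFunc ℝ)) (s : ℂ) :
    evalM G (starRingEnd ℂ s) = (evalM G s).map star := by
  ext i j
  simp [evalM, evalC_conj]

lemma jw_neg (ω : ℝ) : jw (-ω) = starRingEnd ℂ (jw ω) := by simp [jw]

lemma ni_im {P : Matrix (Fin n) (Fin n) (RatFunc ℝ)} (hP : IsNI P) (ω : ℝ) (hp : ¬ HasPole P (jw ω))
    (v : Fin n → ℂ) : ω * (qf (evalM P (jw ω)) v).im ≤ 0 := by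
  rcases lt_trichotomy ω 0 with h | h | h
  · have h2 : jw ω = starRingEnd ℂ (jw (-ω)) := by rw [← jw_neg, neg_neg]
    rw [h2, hasPole_conj] at hp
    have := qf_im_nonpos (hP.2.2.1 (-ω) (by linarith) hp) (star v)
    rw [h2, evalM_conj, qf_map_star]
    simp only [Complex.star_def, Complex.conj_im]
    nlinarith
  · simp [h]
  · have := qf_im_nonpos (hP.2.2.1 ω h hp) v
    nlinarith

lemma sni_im {P : Matrix (Fin n) (Fin n) (RatFunc ℝ)} (hP : IsSNI P) (ω : ℝ) (h0 : ω ≠ 0)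
    {v : Fin n → ℂ} (hv : v ≠ 0) : ω * (qf (evalM P (jw ω)) v).im < 0 := by
  rcases lt_or_gt_of_ne h0 with h | h
  · have h2 : jw ω = starRingEnd ℂ (jw (-ω)) := by rw [← jw_neg, neg_neg]
    have := qf_im_neg (hP.2 (-ω) (by linarith)) (v := star v) (by simpa using hv)
    rw [h2, evalM_conj, qf_map_star]
    simp only [Complex.star_def, Complex.conj_im]
    nlinarith
  · have := qf_im_neg (hP.2 ω h) hv
    nlinarith

lemma sni_nopole {P : Matrix (Fin n) (Fin n) (RatFunc ℝ)} (hP : IsSNI P) {s : ℂ} (hs : 0 ≤ s.re) :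
    ¬ HasPole P s := by
  rintro ⟨i, j, h⟩
  exact hP.1.2 s hs i j h

lemma jw_re (ω : ℝ) : (jw ω).re = 0 := by simp [jw]
lemma jw_zero : jw 0 = 0 := by simp [jw]
lemma eq_jw {a : ℂ} (h : a.re = 0) : a = jw a.im := by
  apply Complex.ext <;> simp [jw, h]

lemma sni_ni {P : Matrix (Fin n) (Fin n) (RatFunc ℝ)} (hP : IsSNI P) : IsNI P := by
  refine ⟨hP.1.1, fun s hs => sni_nopole hP hs.le, fun ω h _ => (hP.2 ω h).posSemidef,
    fun ω h hp => absurd hp (sni_nopole hP (by simp [jw_re])),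
    fun hp => absurd hp (sni_nopole hP (by simp))⟩

lemma continuous_jw : Continuous jw := by unfold jw; fun_prop

/-- a real matrix which is a limit of NI kernels is symmetric -/
lemma real_symm {A : Matrix (Fin n) (Fin n) ℝ}
    (h : ∀ v, (qf (A.map Complex.ofReal) v).im ≤ 0) : Aᵀ = A := by
  have hps : (niKer (A.map Complex.ofReal)).PosSemidef := by
    refine Matrix.PosSemidef.of_dotProduct_mulVec_nonneg ?_ ?_
    · unfold niKer
      ext i j
      simp [Matrix.conjTranspose_apply]
      ring
    · intro v
      change 0 ≤ qf _ v
      rw [qf_niKer]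
      apply Complex.zero_le_real.2
      linarith [h v]
  have htr : (niKer (A.map Complex.ofReal)).trace = 0 := by
    simp [niKer, Matrix.trace]
  have := hps.trace_eq_zero_iff.1 htr
  ext i j
  have := congrFun (congrFun this i) j
  simp [niKer, sub_eq_zero] at this
  simp [this]

lemma ni_symm0 {P : Matrix (Fin n) (Fin n) (RatFunc ℝ)} (hP : IsNI P) (h0 : ¬ HasPole P 0) :
    (evalR P 0)ᵀ = evalR P 0 := by
  apply real_symm
  intro v
  rw [evalR_map]
  have h1 : Tendsto (fun ω : ℝ => (qf (evalM P (jw ω)) v).im) (𝓝[>] 0) (𝓝 (qf (evalM P 0) v).im) := by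
    have hc : ContinuousAt (fun ω : ℝ => (qf (evalM P (jw ω)) v).im) 0 := by
      apply Complex.continuous_im.continuousAt.comp
      apply (qf_continuous v).continuousAt.comp
      have : ContinuousAt (evalM P) (jw 0) := by rw [jw_zero]; exact evalM_continuousAt h0
      exact this.comp continuous_jw.continuousAt
    have := hc.tendsto.mono_left (nhdsWithin_le_nhds (s := Set.Ioi 0))
    rwa [jw_zero] at this
  refine le_of_tendsto h1 ?_
  have h2 : ∀ᶠ ω : ℝ in 𝓝[>] 0, ¬ HasPole P (jw ω) := by
    have : Tendsto jw (𝓝[>] 0) (𝓝[≠] 0) := by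
      apply tendsto_nhdsWithin_of_tendsto_nhds_of_eventually_within
      · have := continuous_jw.continuousAt (x := 0)
        have := this.tendsto.mono_left (nhdsWithin_le_nhds (s := Set.Ioi 0))
        rwa [jw_zero] at this
      · filter_upwards [self_mem_nhdsWithin] with x hx
        simp only [Set.mem_Ioi] at hx
        simp [jw, hx.ne']
    exact this.eventually (ev_not_pole P 0)
  filter_upwards [h2, self_mem_nhdsWithin] with ω h3 h4
  exact qf_im_nonpos (hP.2.2.1 ω h4 h3) v

lemma ni_symm_inf {P : Matrix (Fin n) (Fin n) (RatFunc ℝ)} (hP : IsNI P) :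
    (evalInf P)ᵀ = evalInf P := by
  apply real_symm
  intro v
  have h1 : Tendsto (fun ω : ℝ => (qf (evalM P (jw ω)) v).im) atTop
      (𝓝 (qf ((evalInf P).map Complex.ofReal) v).im) := by
    apply (Complex.continuous_im.tendsto _).comp
    apply ((qf_continuous v).tendsto _).comp
    exact (evalM_tendsto_inf hP.1).comp tendsto_jw_cob
  refine le_of_tendsto h1 ?_
  filter_upwards [tendsto_jw_cob.eventually (ev_not_pole_cob P), eventually_gt_atTop 0] with ω h3 h4
  exact qf_im_nonpos (hP.2.2.1 ω h4 h3) v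

lemma qf_real_im {A : Matrix (Fin n) (Fin n) ℝ} (h : Aᵀ = A) (v : Fin n → ℂ) :
    (qf (A.map Complex.ofReal) v).im = 0 := by
  have h1 := qf_conjTranspose (A.map Complex.ofReal) v
  have h2 : (A.map Complex.ofReal)ᴴ = A.map Complex.ofReal := by
    ext i j
    have := congrFun (congrFun h i) j
    simp at this
    simp [this]
  rw [h2] at h1
  have := congrArg Complex.im h1
  simp at this
  linarith

lemma evalM_diff_entry {G : Matrix (Fin n) (Fin n) (RatFunc ℝ)} {s : ℂ} (h : ¬ HasPole G s) (i j) :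
    DifferentiableAt ℂ (fun s => evalM G s i j) s :=
  evalC_diff (fun hh => h ⟨i, j, hh⟩)

lemma bil_diff {G : Matrix (Fin n) (Fin n) (RatFunc ℝ)} {s : ℂ} (h : ¬ HasPole G s)
    (w v : Fin n → ℂ) : DifferentiableAt ℂ (fun s => w ⬝ᵥ (evalM G s *ᵥ v)) s := by
  simp only [dotProduct, mulVec]
  have := evalM_diff_entry h
  fun_prop (disch := intros; apply this)

/-- imaginary axis poles -/
def imPoles (G : Matrix (Fin n) (Fin n) (RatFunc ℝ)) : Finset ℂ :=
  ((finite_polesM G).subset (Set.inter_subset_left (t := {s : ℂ | s.re = 0}))).toFinset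

lemma mem_imPoles {G : Matrix (Fin n) (Fin n) (RatFunc ℝ)} {s : ℂ} :
    s ∈ imPoles G ↔ HasPole G s ∧ s.re = 0 := by
  simp [imPoles]

lemma ni_reg {P : Matrix (Fin n) (Fin n) (RatFunc ℝ)} (hP : IsNI P) {s : ℂ} (hs : 0 ≤ s.re)
    (h : s ∉ imPoles P) : ¬ HasPole P s := by
  rcases hs.lt_or_eq with h1 | h1
  · exact hP.2.1 s h1
  · intro h2
    exact h (mem_imPoles.2 ⟨h2, h1.symm⟩)

lemma ni_res {P : Matrix (Fin n) (Fin n) (RatFunc ℝ)} (hP : IsNI P) {ω : ℝ} (h : 0 < ω)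
    (hp : HasPole P (jw ω)) (v : Fin n → ℂ) : ∃ r : ℝ, 0 ≤ r ∧
      Tendsto (fun s => (s - jw ω) * qf (evalM P s) v) (𝓝[≠] jw ω) (𝓝 (-(r * jw ω))) := by
  obtain ⟨R, hR, ht⟩ := hP.2.2.2.1 ω h hp
  have h1 := hR.dotProduct_mulVec_nonneg v
  change 0 ≤ qf R v at h1
  obtain ⟨ρ, hρ⟩ : ∃ ρ : ℝ, qf R v = ρ := ⟨(qf R v).re, by
    apply Complex.ext <;> simp
    exact (Complex.le_def.1 h1).2.symm⟩
  rw [hρ] at h1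
  have h2 := Complex.zero_le_real.1 h1
  refine ⟨ρ / ω, by positivity, ?_⟩
  have h3 := (((qf_continuous v).tendsto _).comp ht).const_mul (-Complex.I)
  have hw : (ω : ℂ) ≠ 0 := by exact_mod_cast h.ne'
  have h4 : -Complex.I * qf R v = -(((ρ / ω : ℝ) : ℂ) * jw ω) := by
    rw [hρ, jw]; push_cast; field_simp
  rw [h4] at h3
  refine h3.congr fun s => ?_
  simp only [Function.comp, qf_smul]
  linear_combination (-(s - jw ω) * qf (evalM P s) v) * Complex.I_mul_I

lemma ni_scalar {P : Matrix (Fin n) (Fin n) (RatFunc ℝ)} (hP : IsNI P) (h0 : ¬ HasPole P 0)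
    (v : Fin n → ℂ) (s : ℂ) (hs : 0 < s.re) :
    0 ≤ ((qf (evalM P 0) v - qf (evalM P s) v) / s).re := by
  refine scalar_ni (fun s => qf (evalM P s) v) (qf ((evalInf P).map Complex.ofReal) v) (imPoles P)
    (fun a ha => (mem_imPoles.1 ha).2) (fun h => h0 (mem_imPoles.1 h).1)
    (fun s hs h => bil_diff (ni_reg hP hs h) _ _)
    (((qf_continuous v).tendsto _).comp (evalM_tendsto_inf hP.1))
    (fun a => ?_) (fun ω h => ni_im hP ω (ni_reg hP (by simp [jw_re]) h) v) ?_ ?_ s hs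
  · filter_upwards [ev_not_pole P a] with s hs using bil_diff hs _ _
  · rw [← evalR_map]; exact qf_real_im (ni_symm0 hP h0) v
  · intro a ha
    obtain ⟨ha, hr⟩ := mem_imPoles.1 ha
    rcases lt_trichotomy a.im 0 with h | h | h
    · have e : a = starRingEnd ℂ (jw (-a.im)) := by rw [← jw_neg, neg_neg]; exact eq_jw hr
      have hp : HasPole P (jw (-a.im)) := by rw [e, hasPole_conj] at ha; exact ha
      obtain ⟨r, h1, h2⟩ := ni_res hP (by linarith) hp (star v)
      refine ⟨r, h1, ?_⟩
      have h3 := (Complex.continuous_conj.tendsto _).comp h2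
      have h4 : Tendsto (starRingEnd ℂ) (𝓝[≠] a) (𝓝[≠] (jw (-a.im))) := by
        have e' : jw (-a.im) = starRingEnd ℂ a := by conv_rhs => rw [e, Complex.conj_conj]
        rw [e']
        apply tendsto_nhdsWithin_of_tendsto_nhds_of_eventually_within
        · exact Complex.continuous_conj.continuousAt.tendsto.mono_left nhdsWithin_le_nhds
        · filter_upwards [self_mem_nhdsWithin] with x hx
          simp only [Set.mem_compl_iff, Set.mem_singleton_iff] at hx ⊢
          exact fun h => hx ((starRingEnd ℂ).injective h)
      have h5 := h3.comp h4
      have e6 : starRingEnd ℂ (-(r * jw (-a.im))) = -(r * a) := by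
        rw [map_neg, map_mul, ← e, Complex.conj_ofReal]
      rw [e6] at h5
      refine h5.congr fun z => ?_
      simp only [Function.comp, map_mul, map_sub, Complex.conj_conj, ← e]
      rw [evalM_conj, qf_map_star]
      simp
    · exact absurd (by rw [eq_jw hr, h, jw_zero] at ha; exact ha) h0
    · rw [eq_jw hr] at ha
      obtain ⟨r, h1, h2⟩ := ni_res hP h ha v
      refine ⟨r, h1, ?_⟩
      rw [← eq_jw hr] at h2
      exact h2

lemma qf_ofReal (A : Matrix (Fin n) (Fin n) ℝ) (v : Fin n → ℝ) :
    qf (A.map Complex.ofReal) (fun i => (v i : ℂ)) = ((v ⬝ᵥ (A *ᵥ v) : ℝ) : ℂ) := by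
  simp [qf, dotProduct, mulVec]

lemma ni_psd {P : Matrix (Fin n) (Fin n) (RatFunc ℝ)} (hP : IsNI P) (h0 : ¬ HasPole P 0) :
    (evalR P 0 - evalInf P).PosSemidef := by
  refine Matrix.PosSemidef.of_dotProduct_mulVec_nonneg ?_ ?_
  · rw [Matrix.IsHermitian, Matrix.conjTranspose_eq_transpose_of_trivial, Matrix.transpose_sub,
      ni_symm0 hP h0, ni_symm_inf hP]
  · intro v
    have h1 : Tendsto (fun x : ℝ => (qf (evalM P 0) (fun i => (v i : ℂ)) -
        qf (evalM P x) (fun i => (v i : ℂ))).re) atTop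
        (𝓝 (qf (evalM P 0) (fun i => (v i : ℂ)) - qf ((evalInf P).map Complex.ofReal) (fun i => (v i : ℂ))).re) := by
      apply (Complex.continuous_re.tendsto _).comp
      apply Tendsto.const_sub
      apply ((qf_continuous _).tendsto _).comp
      exact (evalM_tendsto_inf hP.1).comp tendsto_ofReal_cob
    have h2 := ge_of_tendsto (b := 0) h1 (by
      filter_upwards [eventually_gt_atTop 0] with x hx
      have := ni_scalar hP h0 (fun i => (v i : ℂ)) x (by simpa using hx)
      rw [Complex.div_ofReal_re] at this
      have h3 := mul_nonneg this hx.le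
      rwa [div_mul_cancel₀ _ hx.ne'] at h3)
    rw [← evalR_map, qf_ofReal, qf_ofReal] at h2
    simp only [Complex.sub_re, Complex.ofReal_re] at h2
    rw [Matrix.sub_mulVec, dotProduct_sub]
    simpa using h2

lemma map_ofReal_mul (A B : Matrix (Fin n) (Fin n) ℝ) :
    (A * B).map Complex.ofReal = A.map Complex.ofReal * B.map Complex.ofReal :=
  Matrix.map_mul (f := Complex.ofRealHom)

lemma map_ofReal_one : (1 : Matrix (Fin n) (Fin n) ℝ).map Complex.ofReal = 1 :=
  Matrix.map_one _ Complex.ofReal_zero Complex.ofReal_one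

lemma map_ofReal_sub (A B : Matrix (Fin n) (Fin n) ℝ) :
    (A - B).map Complex.ofReal = A.map Complex.ofReal - B.map Complex.ofReal := by
  ext i j; simp

lemma map_ofReal_add (A B : Matrix (Fin n) (Fin n) ℝ) :
    (A + B).map Complex.ofReal = A.map Complex.ofReal + B.map Complex.ofReal := by
  ext i j; simp

lemma map_ofReal_smul (t : ℝ) (B : Matrix (Fin n) (Fin n) ℝ) :
    (t • B).map Complex.ofReal = (t : ℂ) • B.map Complex.ofReal := by
  ext i j; simp

lemma map_ofReal_inj {A B : Matrix (Fin n) (Fin n) ℝ}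
    (h : A.map Complex.ofReal = B.map Complex.ofReal) : A = B :=
  Matrix.map_injective Complex.ofReal_injective h

lemma map_ofReal_det (A : Matrix (Fin n) (Fin n) ℝ) :
    (A.map Complex.ofReal).det = ((A.det : ℝ) : ℂ) :=
  (RingHom.map_det Complex.ofRealHom A).symm

/-- properness and value at infinity from a limit -/
lemma proper_of_tendsto {G : Matrix (Fin n) (Fin n) (RatFunc ℝ)} {L : Matrix (Fin n) (Fin n) ℂ}
    (h : Tendsto (fun x : ℝ => evalM G x) atTop (𝓝 L)) :
    Proper G ∧ (evalInf G).map Complex.ofReal = L := by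
  have hp : Proper G := by
    intro i j
    have h1 := (tendsto_pi_nhds.1 (tendsto_pi_nhds.1 h i) j).norm
    apply proper_of_bdd (‖L i j‖ + 1)
    filter_upwards [h1.eventually (gt_mem_nhds (lt_add_one ‖L i j‖))] with x hx
    exact hx.le
  exact ⟨hp, tendsto_nhds_unique ((evalM_tendsto_inf hp).comp tendsto_ofReal_cob) h⟩

lemma ev_not_pole_real (G : Matrix (Fin n) (Fin n) (RatFunc ℝ)) :
    ∀ᶠ x : ℝ in atTop, ¬ HasPole G x := tendsto_ofReal_cob.eventually (ev_not_pole_cob G)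

lemma tendsto_real {G : Matrix (Fin n) (Fin n) (RatFunc ℝ)} (h : Proper G) :
    Tendsto (fun x : ℝ => evalM G x) atTop (𝓝 ((evalInf G).map Complex.ofReal)) :=
  (evalM_tendsto_inf h).comp tendsto_ofReal_cob

lemma proper_mul {A B : Matrix (Fin n) (Fin n) (RatFunc ℝ)} (hA : Proper A) (hB : Proper B) :
    Proper (A * B) ∧ evalInf (A * B) = evalInf A * evalInf B := by
  have h : Tendsto (fun x : ℝ => evalM (A * B) x) atTop
      (𝓝 ((evalInf A).map Complex.ofReal * (evalInf B).map Complex.ofReal)) := by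
    refine ((tendsto_real hA).mul (tendsto_real hB)).congr' ?_
    filter_upwards [ev_not_pole_real A, ev_not_pole_real B] with x h1 h2
    exact (evalM_mul h1 h2).2.symm
  refine ⟨(proper_of_tendsto h).1, map_ofReal_inj ?_⟩
  rw [(proper_of_tendsto h).2, map_ofReal_mul]

lemma proper_one_sub {A : Matrix (Fin n) (Fin n) (RatFunc ℝ)} (hA : Proper A) :
    Proper (1 - A) ∧ evalInf (1 - A) = 1 - evalInf A := by
  have h : Tendsto (fun x : ℝ => evalM (1 - A) x) atTop
      (𝓝 (1 - (evalInf A).map Complex.ofReal)) := by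
    refine ((tendsto_real hA).const_sub 1).congr' ?_
    filter_upwards [ev_not_pole_real A] with x h1
    exact (evalM_one_sub h1).2.symm
  refine ⟨(proper_of_tendsto h).1, map_ofReal_inj ?_⟩
  rw [(proper_of_tendsto h).2, map_ofReal_sub, map_ofReal_one]

lemma evalInf_one : evalInf (1 : Matrix (Fin n) (Fin n) (RatFunc ℝ)) = 1 := by
  have h : Tendsto (fun x : ℝ => evalM (1 : Matrix (Fin n) (Fin n) (RatFunc ℝ)) x) atTop (𝓝 1) := by
    simp only [evalM_one]
    exact tendsto_const_nhds
  apply map_ofReal_inj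
  rw [(proper_of_tendsto h).2, map_ofReal_one]

/-- closed-loop quadratic form -/
def gq {R : Type*} [CommRing R] (CV CVP V VP : Matrix (Fin n) (Fin n) R) (w1 w2 : Fin n → R) : R :=
  w1 ⬝ᵥ (CV *ᵥ w1) + w1 ⬝ᵥ (CVP *ᵥ w2) + w1 ⬝ᵥ w2 + w2 ⬝ᵥ (V *ᵥ w1) + w2 ⬝ᵥ (VP *ᵥ w2)

lemma gq_ofReal (CV CVP V VP : Matrix (Fin n) (Fin n) ℝ) (w1 w2 : Fin n → ℝ) :
    gq (CV.map Complex.ofReal) (CVP.map Complex.ofReal) (V.map Complex.ofReal) (VP.map Complex.ofReal)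
      (fun i => (w1 i : ℂ)) (fun i => (w2 i : ℂ)) = ((gq CV CVP V VP w1 w2 : ℝ) : ℂ) := by
  simp [gq, dotProduct, mulVec]

lemma gq_im (P C V : Matrix (Fin n) (Fin n) ℂ) (hV : V * (1 - P * C) = 1) (w1 w2 : Fin n → ℂ)
    (h1 : star w1 = w1) (h2 : star w2 = w2) : ∃ x y : Fin n → ℂ,
    (gq (C * V) (C * V * P) V (V * P) w1 w2).im = (qf P y).im + (qf C x).im := by
  have hV' : (1 - P * C) * V = 1 := mul_eq_one_comm.1 hV
  obtain ⟨x, hx⟩ : ∃ x, x = -(V *ᵥ (w1 + P *ᵥ w2)) := ⟨_, rfl⟩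
  obtain ⟨y, hy⟩ : ∃ y, y = C *ᵥ x - w2 := ⟨_, rfl⟩
  refine ⟨x, y, ?_⟩
  have e1 : P *ᵥ y = w1 + x := by
    have : (1 - P * C) *ᵥ x = -(w1 + P *ᵥ w2) := by
      rw [hx, mulVec_neg, mulVec_mulVec, hV', one_mulVec]
    rw [sub_mulVec, one_mulVec, ← mulVec_mulVec] at this
    rw [hy, mulVec_sub]
    have h3 : P *ᵥ (C *ᵥ x) = x + (w1 + P *ᵥ w2) := by
      have h4 : P *ᵥ (C *ᵥ x) = x - (x - P *ᵥ (C *ᵥ x)) := by abel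
      rw [h4, this]; abel
    rw [h3]; abel
  have e2 : C *ᵥ x = y + w2 := by rw [hy]; abel
  have e3 : gq (C * V) (C * V * P) V (V * P) w1 w2 = -(w1 ⬝ᵥ y + w2 ⬝ᵥ x) := by
    rw [hy, hx]
    simp only [gq, mulVec_neg, mulVec_add, mulVec_mulVec, dotProduct_add, dotProduct_neg,
      dotProduct_sub, mul_assoc]
    ring
  have e4 : star y ⬝ᵥ w1 = star (w1 ⬝ᵥ y) := by
    rw [Matrix.star_dotProduct, h1]
  have e5 : star x ⬝ᵥ w2 = star (w2 ⬝ᵥ x) := by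
    rw [Matrix.star_dotProduct, h2]
  have e6 : star x ⬝ᵥ y = star (star y ⬝ᵥ x) := by
    rw [Matrix.star_dotProduct, dotProduct_comm]
  rw [e3, qf, qf, e1, e2, dotProduct_add, dotProduct_add, e4, e5, e6]
  simp
  ring

/-- key linear algebra lemma -/
lemma la_key {m : Type*} [Fintype m] [DecidableEq m] (A B N0 N1 : Matrix m m ℝ)
    (hA : Aᵀ = A) (hB : Bᵀ = B) (h0 : A * N0 = 1) (h1 : B * N1 = 1)
    (hN : ∀ v, 0 ≤ v ⬝ᵥ ((N1 - N0) *ᵥ v)) (u z : m → ℝ) (hz : B *ᵥ z = -((A - B) *ᵥ u))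
    (hu : u ⬝ᵥ ((A - B) *ᵥ u) ≤ u ⬝ᵥ ((A - B) *ᵥ z)) : z = 0 := by
  have h0' : N0 * A = 1 := mul_eq_one_comm.1 h0
  have h1' : N1 * B = 1 := mul_eq_one_comm.1 h1
  have s0 : N0ᵀ = N0 := by
    have := congrArg transpose h0
    rw [transpose_mul, hA, transpose_one] at this
    calc N0ᵀ = N0ᵀ * (A * N0) := by rw [h0, mul_one]
      _ = N0 := by rw [← mul_assoc, this, one_mul]
  have s1 : N1ᵀ = N1 := by
    have := congrArg transpose h1
    rw [transpose_mul, hB, transpose_one] at this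
    calc N1ᵀ = N1ᵀ * (B * N1) := by rw [h1, mul_one]
      _ = N1 := by rw [← mul_assoc, this, one_mul]
  have hps : (N1 - N0).PosSemidef := by
    refine Matrix.PosSemidef.of_dotProduct_mulVec_nonneg ?_ (by simpa using hN)
    rw [Matrix.IsHermitian, Matrix.conjTranspose_eq_transpose_of_trivial, transpose_sub, s0, s1]
  have e1 : (N1 - N0) *ᵥ (A *ᵥ u) = -z := by
    have e : A *ᵥ u = B *ᵥ (u - z) := by
      rw [mulVec_sub, hz, sub_mulVec]; abel
    rw [sub_mulVec, mulVec_mulVec (M := N0), h0', e, mulVec_mulVec, h1', one_mulVec, one_mulVec]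
    abel
  have e2 : (A *ᵥ u) ⬝ᵥ ((N1 - N0) *ᵥ (A *ᵥ u)) ≤ 0 := by
    rw [e1, dotProduct_neg]
    have e3 : (A *ᵥ u) ⬝ᵥ z = u ⬝ᵥ (A *ᵥ z) := by
      rw [dotProduct_mulVec, ← mulVec_transpose, hA]
    rw [e3]
    have e4 : A *ᵥ z = (A - B) *ᵥ z - (A - B) *ᵥ u := by
      rw [sub_mulVec A B z, hz]; abel
    rw [e4, dotProduct_sub]
    linarith
  have e5 := (hps.dotProduct_mulVec_zero_iff (A *ᵥ u)).1 (by
    simpa using le_antisymm e2 (hN _))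
  rw [e1] at e5
  simpa using e5

lemma nec_nonsing (P0 P1 C0 C1 V0 V1 : Matrix (Fin n) (Fin n) ℝ) (hP0 : P0ᵀ = P0) (hP1 : P1ᵀ = P1)
    (hC0 : C0ᵀ = C0) (hC1 : C1ᵀ = C1) (hV0 : V0 * (1 - P0 * C0) = 1) (hV1 : V1 * (1 - P1 * C1) = 1)
    (hEP : (P0 - P1).PosSemidef) (hEC : (C0 - C1).PosSemidef)
    (hg : ∀ v1 v2, gq (C1 * V1) (C1 * V1 * P1) V1 (V1 * P1) v1 v2 ≤
      gq (C0 * V0) (C0 * V0 * P0) V0 (V0 * P0) v1 v2) (t1 t2 : ℝ) (ht1 : t1 ∈ Set.Icc (0:ℝ) 1)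
    (ht2 : t2 ∈ Set.Icc (0:ℝ) 1) :
    (1 - (P1 + t1 • (P0 - P1)) * (C1 + t2 • (C0 - C1))).det ≠ 0 := by
  intro hdet
  obtain ⟨x, hx0, hx⟩ := Matrix.exists_mulVec_eq_zero_iff.2 hdet
  obtain ⟨y, hy⟩ : ∃ y, y = (C1 + t2 • (C0 - C1)) *ᵥ x := ⟨_, rfl⟩
  have hyx : (P1 + t1 • (P0 - P1)) *ᵥ y = x := by
    rw [sub_mulVec, one_mulVec, ← mulVec_mulVec, ← hy] at hx
    exact (sub_eq_zero.1 hx).symm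
  have key : ∀ P C V : Matrix (Fin n) (Fin n) ℝ, V * (1 - P * C) = 1 →
      fromBlocks P (-1) (-1) C * (-fromBlocks (C * V) (1 + C * V * P) V (V * P)) = 1 := by
    intro P C V hV
    have hV' : P * C * V = V - 1 := by
      have := mul_eq_one_comm.1 hV
      rw [sub_mul, one_mul] at this
      rw [← this]; abel
    rw [mul_neg, fromBlocks_multiply, ← fromBlocks_one, fromBlocks_neg]
    congr 1
    · rw [← mul_assoc, hV']; simp
    · rw [mul_add, mul_one, ← mul_assoc, ← mul_assoc, hV', sub_mul]; simp
    · simp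
    · rw [← mul_assoc]; simp
  have quad : ∀ (P C V : Matrix (Fin n) (Fin n) ℝ) (v : Fin n ⊕ Fin n → ℝ),
      v ⬝ᵥ (-fromBlocks (C * V) (1 + C * V * P) V (V * P) *ᵥ v) =
      - gq (C * V) (C * V * P) V (V * P) (v ∘ Sum.inl) (v ∘ Sum.inr) := by
    intro P C V v
    rw [neg_mulVec, dotProduct_neg, fromBlocks_mulVec]
    simp only [dotProduct, Fintype.sum_sum_type, Sum.elim_inl, Sum.elim_inr, gq, Pi.add_apply,
      mul_add, Finset.sum_add_distrib, add_mulVec, one_mulVec, Function.comp]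
    ring
  have symm : ∀ P C : Matrix (Fin n) (Fin n) ℝ, Pᵀ = P → Cᵀ = C →
      (fromBlocks P (-1) (-1) C)ᵀ = fromBlocks P (-1) (-1) C := by
    intro P C h1 h2
    rw [fromBlocks_transpose, h1, h2]; simp
  have hz := la_key _ _ _ _ (symm P0 C0 hP0 hC0) (symm P1 C1 hP1 hC1) (key P0 C0 V0 hV0)
    (key P1 C1 V1 hV1) (by
      intro v
      rw [sub_mulVec, dotProduct_sub, quad, quad]
      linarith [hg (v ∘ Sum.inl) (v ∘ Sum.inr)]) (Sum.elim (t1 • y) (t2 • x)) (Sum.elim y x) (by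
      rw [sub_mulVec, fromBlocks_mulVec, fromBlocks_mulVec, fromBlocks_mulVec]
      simp only [Sum.elim_comp_inl, Sum.elim_comp_inr]
      have e1 : P1 *ᵥ y - x = - (t1 • (P0 *ᵥ y - P1 *ᵥ y)) := by
        rw [← sub_mulVec, ← smul_mulVec]
        conv_lhs => rw [← hyx, add_mulVec]
        abel
      have e2 : C1 *ᵥ x - y = - (t2 • (C0 *ᵥ x - C1 *ᵥ x)) := by
        rw [← sub_mulVec, ← smul_mulVec]
        rw [hy, add_mulVec]
        abel
      ext i
      rcases i with i | i
      · have := congrFun e1 i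
        simp [neg_mulVec, mulVec_smul] at this ⊢
        linarith
      · have := congrFun e2 i
        simp [neg_mulVec, mulVec_smul] at this ⊢
        linarith) (by
      have e : fromBlocks P0 (-1) (-1) C0 - fromBlocks P1 (-1) (-1) C1 =
          fromBlocks (P0 - P1) 0 0 (C0 - C1) := by
        ext i j; rcases i with i | i <;> rcases j with j | j <;> simp
      rw [e, fromBlocks_mulVec, fromBlocks_mulVec]
      simp only [Sum.elim_comp_inl, Sum.elim_comp_inr, zero_mulVec, smul_zero, add_zero, zero_add,
        sumElim_dotProduct_sumElim, mulVec_smul, smul_dotProduct, dotProduct_smul, smul_eq_mul]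
      have a1 := hEP.dotProduct_mulVec_nonneg y
      have a2 := hEC.dotProduct_mulVec_nonneg x
      simp only [star_trivial] at a1 a2
      have b1 : t1 * (t1 * (y ⬝ᵥ (P0 - P1) *ᵥ y)) ≤ t1 * (y ⬝ᵥ (P0 - P1) *ᵥ y) := by
        apply mul_le_mul_of_nonneg_left _ ht1.1
        nlinarith [ht1.2]
      have b2 : t2 * (t2 * (x ⬝ᵥ (C0 - C1) *ᵥ x)) ≤ t2 * (x ⬝ᵥ (C0 - C1) *ᵥ x) := by
        apply mul_le_mul_of_nonneg_left _ ht2.1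
        nlinarith [ht2.2]
      linarith)
  apply hx0
  ext i
  exact congrFun hz (Sum.inr i)

lemma memRHinf_iff (G : Matrix (Fin n) (Fin n) (RatFunc ℝ)) :
    MemRHinf G ↔ Proper G ∧ ∀ s : ℂ, 0 ≤ s.re → ¬ HasPole G s := by
  unfold MemRHinf Proper HasPole
  push Not
  rfl

lemma memRHinf_blocks (A B D E : Matrix (Fin n) (Fin n) (RatFunc ℝ)) :
    MemRHinf (fromBlocks A B D E) ↔ MemRHinf A ∧ MemRHinf B ∧ MemRHinf D ∧ MemRHinf E := by
  constructor
  · rintro ⟨h1, h2⟩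
    exact ⟨⟨fun i j => h1 (Sum.inl i) (Sum.inl j), fun s hs i j => h2 s hs (Sum.inl i) (Sum.inl j)⟩,
      ⟨fun i j => h1 (Sum.inl i) (Sum.inr j), fun s hs i j => h2 s hs (Sum.inl i) (Sum.inr j)⟩,
      ⟨fun i j => h1 (Sum.inr i) (Sum.inl j), fun s hs i j => h2 s hs (Sum.inr i) (Sum.inl j)⟩,
      ⟨fun i j => h1 (Sum.inr i) (Sum.inr j), fun s hs i j => h2 s hs (Sum.inr i) (Sum.inr j)⟩⟩
  · rintro ⟨h1, h2, h3, h4⟩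
    constructor
    · rintro (i | i) (j | j)
      · exact h1.1 i j
      · exact h2.1 i j
      · exact h3.1 i j
      · exact h4.1 i j
    · rintro s hs (i | i) (j | j)
      · exact h1.2 s hs i j
      · exact h2.2 s hs i j
      · exact h3.2 s hs i j
      · exact h4.2 s hs i j

lemma spectrum_vec {M : Matrix (Fin n) (Fin n) ℂ} {μ : ℂ} (h : μ ∈ spectrum ℂ M) :
    ∃ v, v ≠ 0 ∧ M *ᵥ v = μ • v := by
  rw [spectrum.mem_iff, Matrix.isUnit_iff_isUnit_det, isUnit_iff_ne_zero, not_not] at h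
  obtain ⟨v, hv, h⟩ := Matrix.exists_mulVec_eq_zero_iff.2 h
  refine ⟨v, hv, ?_⟩
  rw [sub_mulVec, Matrix.algebraMap_eq_diagonal] at h
  have h2 := (sub_eq_zero.1 h).symm
  rw [h2]
  ext i
  simp [mulVec_diagonal]

lemma vec_spectrum {M : Matrix (Fin n) (Fin n) ℂ} {μ : ℂ} {v : Fin n → ℂ} (hv : v ≠ 0)
    (h : M *ᵥ v = μ • v) : μ ∈ spectrum ℂ M := by
  rw [spectrum.mem_iff, Matrix.isUnit_iff_isUnit_det, isUnit_iff_ne_zero, not_not]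
  apply Matrix.exists_mulVec_eq_zero_iff.1
  refine ⟨v, hv, ?_⟩
  rw [sub_mulVec, h, Matrix.algebraMap_eq_diagonal]
  ext i
  simp [mulVec_diagonal]

open scoped MatrixOrder Matrix.Norms.L2Operator in
lemma psd_factor {E : Matrix (Fin n) (Fin n) ℝ} (hE : E.PosSemidef) :
    ∃ B : Matrix (Fin n) (Fin n) ℝ, E = Bᴴ * B := by
  obtain ⟨B, hB⟩ := CStarAlgebra.nonneg_iff_eq_star_mul_self.mp hE.nonneg
  exact ⟨B, hB⟩

lemma eig_nec_aux (S E : Matrix (Fin n) (Fin n) ℝ) (hS : Sᵀ = S) (hE : E.PosSemidef)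
    (hdet : ∀ t ∈ Set.Icc (0:ℝ) 1, (1 - t • (S * E)).det ≠ 0) : maxEigLT (S * E - 1) 0 := by
  have hEt : Eᵀ = E := by
    have := hE.1
    rwa [Matrix.IsHermitian, Matrix.conjTranspose_eq_transpose_of_trivial] at this
  have hEc : (E.map Complex.ofReal).PosSemidef := by
    obtain ⟨B, hB⟩ := psd_factor hE
    have : E.map Complex.ofReal = (B.map Complex.ofReal)ᴴ * B.map Complex.ofReal := by
      rw [hB, map_ofReal_mul]
      congr 1
      ext i j; simp
    rw [this]
    exact Matrix.posSemidef_conjTranspose_mul_self _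
  intro μ hμ
  obtain ⟨v, hv, h⟩ := spectrum_vec hμ
  have h1 : (S.map Complex.ofReal) *ᵥ ((E.map Complex.ofReal) *ᵥ v) = (μ + 1) • v := by
    rw [map_ofReal_sub, map_ofReal_one, map_ofReal_mul, sub_mulVec, one_mulVec, ← mulVec_mulVec,
      sub_eq_iff_eq_add] at h
    rw [h, add_smul, one_smul]
  have hq : qf ((E * S * E).map Complex.ofReal) v = (μ + 1) * qf (E.map Complex.ofReal) v := by
    rw [map_ofReal_mul, map_ofReal_mul, qf, ← mulVec_mulVec, ← mulVec_mulVec, h1, mulVec_smul, dotProduct_smul]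
    rfl
  have hi1 : (qf ((E * S * E).map Complex.ofReal) v).im = 0 := by
    apply qf_real_im
    rw [transpose_mul, transpose_mul, hS, hEt, mul_assoc]
  have hi2 := qf_real_im hEt v
  rw [hq, Complex.mul_im, hi2, mul_zero, zero_add] at hi1
  simp only [Complex.add_im, Complex.one_im, add_zero] at hi1
  have him : μ.im = 0 := by
    rcases mul_eq_zero.1 hi1 with h3 | h3
    · exact h3
    · have h4 : qf (E.map Complex.ofReal) v = 0 := Complex.ext h3 hi2
      have h5 := (hEc.dotProduct_mulVec_zero_iff v).1 h4
      rw [h5, mulVec_zero] at h1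
      rcases smul_eq_zero.1 h1.symm with h6 | h6
      · have := congrArg Complex.im h6
        simpa using this
      · exact absurd h6 hv
  refine ⟨him, ?_⟩
  by_contra hre
  push Not at hre
  have hl : (0:ℝ) < μ.re + 1 := by linarith
  have hμr : μ + 1 = ((μ.re + 1 : ℝ) : ℂ) := by
    apply Complex.ext <;> simp [him]
  apply hdet (1 / (μ.re + 1)) ⟨by positivity, by rw [div_le_one hl]; linarith⟩
  have : ((1 - (1 / (μ.re + 1)) • (S * E)).map Complex.ofReal).det = 0 := by
    apply Matrix.exists_mulVec_eq_zero_iff.1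
    refine ⟨v, hv, ?_⟩
    rw [map_ofReal_sub, map_ofReal_one, map_ofReal_smul, map_ofReal_mul, sub_mulVec, one_mulVec,
      smul_mulVec, ← mulVec_mulVec, h1, smul_smul, hμr, ← Complex.ofReal_mul,
      one_div_mul_cancel hl.ne']
    simp
  rw [map_ofReal_det] at this
  exact_mod_cast this

lemma eig_nec (A B D : Matrix (Fin n) (Fin n) ℝ) (hA : Aᵀ = A) (hB : Bᵀ = B)
    (hE : (D - B).PosSemidef)
    (hdet : ∀ t ∈ Set.Icc (0:ℝ) 1, (1 - A * (B + t • (D - B))).det ≠ 0) :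
    maxEigLT ((1 - A * B)⁻¹ * (A * D - 1)) 0 := by
  have h0 : (1 - A * B).det ≠ 0 := by simpa using hdet 0 (by simp)
  have hu : IsUnit (1 - A * B).det := isUnit_iff_ne_zero.2 h0
  obtain ⟨V, hV⟩ : ∃ V, V = (1 - A * B)⁻¹ := ⟨_, rfl⟩
  have h1 : V * (1 - A * B) = 1 := by rw [hV]; exact Matrix.nonsing_inv_mul _ hu
  have h2 : (1 - A * B) * V = 1 := by rw [hV]; exact Matrix.mul_nonsing_inv _ hu
  rw [← hV]
  have e : V * (A * D - 1) = (V * A) * (D - B) - 1 := by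
    have : A * D - 1 = A * (D - B) - (1 - A * B) := by rw [mul_sub]; abel
    rw [this, mul_sub, h1, mul_assoc]
  rw [e]
  apply eig_nec_aux _ _ _ hE
  · intro t ht hd
    apply hdet t ht
    have : 1 - A * (B + t • (D - B)) = (1 - A * B) * (1 - t • (V * A * (D - B))) := by
      rw [mul_sub, mul_one, mul_smul_comm, ← mul_assoc, ← mul_assoc, h2, one_mul, mul_add,
        mul_smul_comm]
      abel
    rw [this, det_mul, hd, mul_zero]
  · have h3 : (1 - B * A) * Vᵀ = 1 := by
      have := congrArg transpose h1
      rwa [transpose_mul, transpose_sub, transpose_mul, hA, hB, transpose_one] at this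
    rw [transpose_mul, hA]
    calc A * Vᵀ = V * (1 - A * B) * A * Vᵀ := by rw [h1, one_mul]
      _ = V * A * ((1 - B * A) * Vᵀ) := by
        simp only [mul_sub, sub_mul, mul_one, one_mul, mul_assoc]
      _ = V * A := by rw [h3, mul_one]

lemma eig_suff (A B D : Matrix (Fin n) (Fin n) ℝ) (h0 : (1 - A * B).det ≠ 0)
    (h : maxEigLT ((1 - A * B)⁻¹ * (A * D - 1)) 0) (t : ℝ) (ht : t ∈ Set.Icc (0:ℝ) 1) :
    (1 - A * (B + t • (D - B))).det ≠ 0 := by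
  intro hd
  have hu : IsUnit (1 - A * B).det := isUnit_iff_ne_zero.2 h0
  obtain ⟨V, hV⟩ : ∃ V, V = (1 - A * B)⁻¹ := ⟨_, rfl⟩
  have h1 : V * (1 - A * B) = 1 := by rw [hV]; exact Matrix.nonsing_inv_mul _ hu
  rw [← hV] at h
  obtain ⟨v, hv, hk⟩ := Matrix.exists_mulVec_eq_zero_iff.2 hd
  have ht0 : t ≠ 0 := by
    rintro rfl
    simp at hd
    exact h0 hd
  have htp : 0 < t := lt_of_le_of_ne ht.1 (Ne.symm ht0)
  have e : V * (A * D - 1) = (V * A) * (D - B) - 1 := by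
    have : A * D - 1 = A * (D - B) - (1 - A * B) := by rw [mul_sub]; abel
    rw [this, mul_sub, h1, mul_assoc]
  have hk2 : (V * (1 - A * (B + t • (D - B)))) *ᵥ v = 0 := by
    rw [← mulVec_mulVec, hk, mulVec_zero]
  have e2 : V * (1 - A * (B + t • (D - B))) = 1 - t • (V * A * (D - B)) := by
    have : 1 - A * (B + t • (D - B)) = (1 - A * B) - t • (A * (D - B)) := by
      rw [mul_add, mul_smul_comm]; abel
    rw [this, mul_sub, h1, mul_smul_comm, mul_assoc]
  rw [e2, sub_mulVec, one_mulVec, smul_mulVec, sub_eq_zero] at hk2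
  have e3 : (V * A * (D - B)) *ᵥ v = (1 / t) • v := by
    conv_rhs => rw [hk2, smul_smul, one_div_mul_cancel ht0, one_smul]
  have e4 : (V * (A * D - 1)) *ᵥ v = (1 / t - 1) • v := by
    rw [e, sub_mulVec, e3, one_mulVec, sub_smul, one_smul]
  have hm := h ((1 / t - 1 : ℝ) : ℂ) (vec_spectrum (v := fun i => (v i : ℂ)) (by
    intro hh
    apply hv
    ext i
    simpa using congrFun hh i) (by
    ext i
    have := congrFun e4 i
    have e5 : (((V * (A * D - 1)).map Complex.ofReal) *ᵥ fun i => (v i : ℂ)) i =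
        (((V * (A * D - 1)) *ᵥ v) i : ℝ) := by simp [mulVec, dotProduct]
    rw [e5, this]
    simp))
  have := hm.2
  rw [Complex.ofReal_re] at this
  have h3 : 1 ≤ 1 / t := by rw [le_div_iff₀ htp]; linarith [ht.2]
  linarith

lemma eval_inv {A V : Matrix (Fin n) (Fin n) (RatFunc ℝ)} (h : V * A = 1) {s : ℂ}
    (hA : ¬ HasPole A s) (hV : ¬ HasPole V s) : evalM V s * evalM A s = 1 := by
  rw [← (evalM_mul hV hA).2, h, evalM_one]

lemma gq_tendsto {l : Filter ℂ} {A B D E : ℂ → Matrix (Fin n) (Fin n) ℂ}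
    {a b d e : Matrix (Fin n) (Fin n) ℂ} (hA : Tendsto A l (𝓝 a)) (hB : Tendsto B l (𝓝 b))
    (hD : Tendsto D l (𝓝 d)) (hE : Tendsto E l (𝓝 e)) (w1 w2 : Fin n → ℂ) :
    Tendsto (fun s => gq (A s) (B s) (D s) (E s) w1 w2) l (𝓝 (gq a b d e w1 w2)) := by
  have key : ∀ {M : ℂ → Matrix (Fin n) (Fin n) ℂ} {m : Matrix (Fin n) (Fin n) ℂ},
      Tendsto M l (𝓝 m) → ∀ x y : Fin n → ℂ,
      Tendsto (fun s => x ⬝ᵥ (M s *ᵥ y)) l (𝓝 (x ⬝ᵥ (m *ᵥ y))) := by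
    intro M m h x y
    have hc : Continuous fun m : Matrix (Fin n) (Fin n) ℂ => x ⬝ᵥ (m *ᵥ y) := by fun_prop
    exact (hc.tendsto m).comp h
  unfold gq
  exact ((((key hA w1 w1).add (key hB w1 w2)).add_const _).add (key hD w2 w1)).add (key hE w2 w2)

set_option maxHeartbeats 1000000 in
lemma nec_core (P C : Matrix (Fin n) (Fin n) (RatFunc ℝ))
    (hP : IsNI P) (hP0 : ¬ HasPole P 0) (hC : IsSNI C) (hS : FeedbackStable P C) :
    ∃ V0 V1 : Matrix (Fin n) (Fin n) ℝ, V0 * (1 - evalR P 0 * evalR C 0) = 1 ∧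
      V1 * (1 - evalInf P * evalInf C) = 1 ∧
      ∀ v1 v2, gq (evalInf C * V1) (evalInf C * V1 * evalInf P) V1 (V1 * evalInf P) v1 v2 ≤
      gq (evalR C 0 * V0) (evalR C 0 * V0 * evalR P 0) V0 (V0 * evalR P 0) v1 v2 := by
  obtain ⟨hdet, hH⟩ := hS
  obtain ⟨V, hV⟩ : ∃ V, V = (1 - P * C)⁻¹ := ⟨_, rfl⟩
  rw [← hV] at hH
  have hVi : V * (1 - P * C) = 1 := by
    rw [hV]; exact Matrix.nonsing_inv_mul _ (isUnit_iff_ne_zero.2 hdet)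
  obtain ⟨hV1, hVP1, hCV1, hCVP1⟩ := (memRHinf_blocks _ _ _ _).1 hH
  rw [memRHinf_iff] at hV1 hVP1 hCV1 hCVP1
  have hCp : Proper C := hC.1.1
  have hCr : ∀ s : ℂ, 0 ≤ s.re → ¬ HasPole C s := fun s hs => sni_nopole hC hs
  have ev : ∀ s : ℂ, 0 ≤ s.re → ¬ HasPole P s →
      evalM V s * (1 - evalM P s * evalM C s) = 1 ∧ evalM (V * P) s = evalM V s * evalM P s ∧
      evalM (C * V) s = evalM C s * evalM V s ∧
      evalM (C * V * P) s = evalM C s * evalM V s * evalM P s := by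
    intro s hs hp
    have h1 := evalM_mul hp (hCr s hs)
    have h2 := evalM_one_sub h1.1
    have h3 := evalM_mul (hCr s hs) (hV1.2 s hs)
    refine ⟨?_, (evalM_mul (hV1.2 s hs) hp).2, h3.2, ?_⟩
    · rw [← h1.2, ← h2.2]
      exact eval_inv hVi h2.1 (hV1.2 s hs)
    · rw [(evalM_mul h3.1 hp).2, h3.2]
  have ev0 := ev 0 (by simp) hP0
  simp only [← evalR_map, ← map_ofReal_mul, ← map_ofReal_one, ← map_ofReal_sub] at ev0
  obtain ⟨a1, a2, a3, a4⟩ := ev0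
  have a1 := map_ofReal_inj a1
  have b1 : evalInf V * (1 - evalInf P * evalInf C) = 1 := by
    have h1 := proper_mul hP.1 hCp
    have h2 := proper_one_sub h1.1
    rw [← h1.2, ← h2.2, ← (proper_mul hV1.1 h2.1).2, hVi, evalInf_one]
  have b2 := (proper_mul hV1.1 hP.1).2
  have b3 := (proper_mul hCp hV1.1)
  have b4 := (proper_mul b3.1 hP.1).2
  rw [b3.2] at b4
  refine ⟨evalR V 0, evalInf V, a1, b1, ?_⟩
  intro v1 v2
  obtain ⟨w1, hw1⟩ : ∃ w1 : Fin n → ℂ, w1 = fun i => (v1 i : ℂ) := ⟨_, rfl⟩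
  obtain ⟨w2, hw2⟩ : ∃ w2 : Fin n → ℂ, w2 = fun i => (v2 i : ℂ) := ⟨_, rfl⟩
  have sw1 : star w1 = w1 := by ext i; simp [hw1]
  have sw2 : star w2 = w2 := by ext i; simp [hw2]
  obtain ⟨g, hg⟩ : ∃ g : ℂ → ℂ, g = fun s => gq (evalM (C * V) s) (evalM (C * V * P) s) (evalM V s)
    (evalM (V * P) s) w1 w2 := ⟨_, rfl⟩
  have gd : ∀ s, ¬ HasPole (C * V) s → ¬ HasPole (C * V * P) s → ¬ HasPole V s → ¬ HasPole (V * P) s →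
      DifferentiableAt ℂ g s := by
    intro s h1 h2 h3 h4
    rw [hg]
    exact ((((bil_diff h1 w1 w1).add (bil_diff h2 w1 w2)).add
      (differentiableAt_const (w1 ⬝ᵥ w2))).add (bil_diff h3 w2 w1)).add (bil_diff h4 w2 w2)
  have gd' : ∀ s : ℂ, 0 ≤ s.re → DifferentiableAt ℂ g s := fun s hs =>
    gd s (hCV1.2 s hs) (hCVP1.2 s hs) (hV1.2 s hs) (hVP1.2 s hs)
  have g0 : g 0 = ((gq (evalR C 0 * evalR V 0) (evalR C 0 * evalR V 0 * evalR P 0) (evalR V 0)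
      (evalR V 0 * evalR P 0) v1 v2 : ℝ) : ℂ) := by
    rw [← gq_ofReal, ← a2, ← a3, ← a4]
    rw [hg, hw1, hw2]
    simp only [evalR_map]
  have ginf : Tendsto g (Bornology.cobounded ℂ) (𝓝 ((gq (evalInf C * evalInf V)
      (evalInf C * evalInf V * evalInf P) (evalInf V) (evalInf V * evalInf P) v1 v2 : ℝ) : ℂ)) := by
    rw [← gq_ofReal, ← b2, ← b3.2, ← (proper_mul b3.1 hP.1).2]
    have t1 := evalM_tendsto_inf hV1.1
    have t2 := evalM_tendsto_inf hVP1.1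
    have t3 := evalM_tendsto_inf hCV1.1
    have t4 := evalM_tendsto_inf hCVP1.1
    rw [hg, ← hw1, ← hw2]
    exact gq_tendsto t3 t4 t1 t2 w1 w2
  have hsc := scalar_ni g _ (imPoles P) (fun a ha => (mem_imPoles.1 ha).2)
    (fun h => hP0 (mem_imPoles.1 h).1) (fun s hs _ => gd' s hs) ginf
    (fun a => by
      filter_upwards [ev_not_pole (C * V) a, ev_not_pole (C * V * P) a, ev_not_pole V a,
        ev_not_pole (V * P) a] with s h1 h2 h3 h4 using gd s h1 h2 h3 h4)
    (fun ω h => by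
      have hre : 0 ≤ (jw ω).re := by simp [jw_re]
      have hp := ni_reg hP hre h
      obtain ⟨c1, c2, c3, c4⟩ := ev _ hre hp
      obtain ⟨x, y, hxy⟩ := gq_im _ _ _ c1 w1 w2 sw1 sw2
      simp only [hg]
      rw [c2, c3, c4, hxy, mul_add]
      have d1 := ni_im hP ω hp y
      have d2 := ni_im (sni_ni hC) ω (hCr _ hre) x
      linarith) (by rw [g0]; exact Complex.ofReal_im _)
    (fun a ha => ⟨0, le_rfl, by
      have hc := (gd' a (mem_imPoles.1 ha).2.ge).continuousAt
      have h1 : ContinuousAt (fun s => (s - a) * g s) a := by fun_prop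
      have h2 := h1.tendsto.mono_left (nhdsWithin_le_nhds (s := {a}ᶜ))
      simpa using h2⟩)
  have h1 : Tendsto (fun x : ℝ => (g 0 - g x).re) atTop (𝓝 (g 0 - ((gq (evalInf C * evalInf V)
      (evalInf C * evalInf V * evalInf P) (evalInf V) (evalInf V * evalInf P) v1 v2 : ℝ) : ℂ)).re) := by
    apply (Complex.continuous_re.tendsto _).comp
    apply Tendsto.const_sub
    exact ginf.comp tendsto_ofReal_cob
  have h2 := ge_of_tendsto (b := 0) h1 (by
    filter_upwards [eventually_gt_atTop 0] with x hx
    have := hsc x (by simpa using hx)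
    rw [Complex.div_ofReal_re] at this
    have h3 := mul_nonneg this hx.le
    rwa [div_mul_cancel₀ _ hx.ne'] at h3)
  rw [g0] at h2
  simp only [Complex.sub_re, Complex.ofReal_re] at h2
  linarith

lemma necessity (P C : Matrix (Fin n) (Fin n) (RatFunc ℝ))
    (hP : IsNI P) (hP0 : ¬ HasPole P 0) (hC : IsSNI C) (hS : FeedbackStable P C) :
      ((1 - evalInf P * evalInf C).det ≠ 0 ∧
       maxEigLT ((1 - evalInf P * evalInf C)⁻¹ * (evalInf P * evalR C 0 - 1)) 0 ∧
       maxEigLT ((1 - evalR C 0 * evalInf P)⁻¹ * (evalR C 0 * evalR P 0 - 1)) 0) := by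
  obtain ⟨V0, V1, h0, h1, h2⟩ := nec_core P C hP hP0 hC hS
  have hCN := sni_ni hC
  have hC0 : ¬ HasPole C 0 := sni_nopole hC (by simp)
  have key := nec_nonsing _ _ _ _ V0 V1 (ni_symm0 hP hP0) (ni_symm_inf hP) (ni_symm0 hCN hC0)
    (ni_symm_inf hCN) h0 h1 (ni_psd hP hP0) (ni_psd hCN hC0) h2
  refine ⟨?_, ?_, ?_⟩
  · simpa using key 0 0 (by simp) (by simp)
  · apply eig_nec _ _ _ (ni_symm_inf hP) (ni_symm_inf hCN) (ni_psd hCN hC0)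
    intro t ht
    simpa using key 0 t (by simp) ht
  · apply eig_nec _ _ _ (ni_symm0 hCN hC0) (ni_symm_inf hP) (ni_psd hP hP0)
    intro t ht
    have := key t 1 ht (by simp)
    rw [Matrix.det_one_sub_mul_comm] at this
    simpa using this

lemma det_diff {M : ℂ → Matrix (Fin n) (Fin n) ℂ} {s : ℂ}
    (h : ∀ i j, DifferentiableAt ℂ (fun z => M z i j) s) :
    DifferentiableAt ℂ (fun z => (M z).det) s := by
  simp only [Matrix.det_apply]
  refine DifferentiableAt.fun_sum fun σ _ => ?_
  refine DifferentiableAt.const_smul ?_ _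
  exact DifferentiableAt.fun_finsetProd fun i _ => h _ _

lemma mem_cball (p : ℂ) : p ∈ Metric.closedBall (1/2 : ℂ) (1/2) ↔ Complex.normSq p ≤ p.re := by
  rw [Metric.mem_closedBall, dist_eq_norm, ← sq_le_sq₀ (norm_nonneg _) (by norm_num),
    ← Complex.normSq_eq_norm_sq, Complex.normSq_apply, Complex.normSq_apply]
  simp
  constructor <;> intro h <;> nlinarith

lemma mem_sph (p : ℂ) : p ∈ Metric.sphere (1/2 : ℂ) (1/2) ↔ Complex.normSq p = p.re := by
  rw [Metric.mem_sphere, dist_eq_norm, ← sq_eq_sq₀ (norm_nonneg _) (by norm_num),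
    ← Complex.normSq_eq_norm_sq, Complex.normSq_apply, Complex.normSq_apply]
  simp
  constructor <;> intro h <;> nlinarith

/-- compactified function -/
def hat (A : ℂ → Matrix (Fin n) (Fin n) ℂ) (Ai : Matrix (Fin n) (Fin n) ℂ) (p : ℂ) :
    Matrix (Fin n) (Fin n) ℂ := if p = 0 then Ai else A (p⁻¹ - 1)

lemma hat_ev (A : ℂ → Matrix (Fin n) (Fin n) ℂ) (Ai : Matrix (Fin n) (Fin n) ℂ) {p : ℂ} (hp : p ≠ 0) :
    hat A Ai =ᶠ[𝓝 p] fun q => A (q⁻¹ - 1) := by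
  filter_upwards [isOpen_ne.mem_nhds hp] with q hq
  simp only [hat, if_neg hq]

lemma re_of_cball {p : ℂ} (hp : p ≠ 0) (h : p ∈ Metric.closedBall (1/2 : ℂ) (1/2)) :
    0 ≤ (p⁻¹ - 1).re := by
  rw [mem_cball] at h
  rw [Complex.sub_re, Complex.inv_re, Complex.one_re, sub_nonneg, le_div_iff₀ (Complex.normSq_pos.2 hp)]
  linarith

lemma entry_cont {A : ℂ → Matrix (Fin n) (Fin n) ℂ} {s : ℂ}
    (h : ∀ i j, DifferentiableAt ℂ (fun z => A z i j) s) : ContinuousAt A s :=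
  tendsto_pi_nhds.2 fun i => tendsto_pi_nhds.2 fun j => (h i j).continuousAt

lemma hat_cont {A : ℂ → Matrix (Fin n) (Fin n) ℂ} {Ai : Matrix (Fin n) (Fin n) ℂ}
    (hA : ∀ s : ℂ, 0 ≤ s.re → ∀ i j, DifferentiableAt ℂ (fun z => A z i j) s)
    (hAi : Tendsto A (Bornology.cobounded ℂ) (𝓝 Ai)) {p : ℂ}
    (h : p ∈ Metric.closedBall (1/2 : ℂ) (1/2)) : ContinuousAt (hat A Ai) p := by
  by_cases hp : p = 0
  · subst hp
    rw [continuousAt_iff_punctured_nhds]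
    have h1 : hat A Ai 0 = Ai := by simp [hat]
    rw [h1]
    have h2 : Tendsto (fun q : ℂ => q⁻¹ - 1) (𝓝[≠] 0) (Bornology.cobounded ℂ) := by
      have h3 := Filter.tendsto_inv₀_nhdsNE_zero (α := ℂ)
      rw [← tendsto_norm_atTop_iff_cobounded] at h3 ⊢
      refine tendsto_atTop_mono (fun q => ?_) (tendsto_atTop_add_const_right _ (-1) h3)
      have := norm_sub_norm_le q⁻¹ 1
      simp at this ⊢
      linarith
    refine (hAi.comp h2).congr' ?_
    filter_upwards [self_mem_nhdsWithin] with q hq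
    have hq' : q ≠ 0 := hq
    simp [hat, hq']
  · have h1 := entry_cont (hA _ (re_of_cball hp h))
    have h2 : ContinuousAt (fun q : ℂ => q⁻¹ - 1) p := by fun_prop (disch := exact hp)
    have h3 : ContinuousAt (fun q => A (q⁻¹ - 1)) p := ContinuousAt.comp (f := fun q : ℂ => q⁻¹ - 1) h1 h2
    exact h3.congr (hat_ev A Ai hp).symm

lemma leg {A B : ℂ → Matrix (Fin n) (Fin n) ℂ} {X Ai Bi : Matrix (Fin n) (Fin n) ℂ}
    (hA : ∀ s : ℂ, 0 ≤ s.re → ∀ i j, DifferentiableAt ℂ (fun z => A z i j) s)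
    (hB : ∀ s : ℂ, 0 ≤ s.re → ∀ i j, DifferentiableAt ℂ (fun z => B z i j) s)
    (hAi : Tendsto A (Bornology.cobounded ℂ) (𝓝 Ai)) (hBi : Tendsto B (Bornology.cobounded ℂ) (𝓝 Bi))
    (hinf : ∀ t ∈ Set.Icc (0:ℝ) 1, (1 - (X + (t:ℂ) • (Ai - X)) * Bi).det ≠ 0)
    (hax : ∀ t ∈ Set.Icc (0:ℝ) 1, ∀ ω : ℝ,
      (1 - (X + (t:ℂ) • (A (jw ω) - X)) * B (jw ω)).det ≠ 0)
    (h0 : ∀ s : ℂ, 0 ≤ s.re → (1 - X * B s).det ≠ 0) :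
    ∀ s : ℂ, 0 ≤ s.re → (1 - A s * B s).det ≠ 0 := by
  have main := homotopy_ball (1/2) (1/2) (by norm_num)
    (fun t p => (1 - (X + (t:ℂ) • (hat A Ai p - X)) * hat B Bi p).det) ?_ ?_ ?_ ?_
  · intro s hs
    have h1 : s + 1 ≠ 0 := by
      intro h
      have := congrArg Complex.re h
      simp at this
      linarith
    have hm := main (s + 1)⁻¹ (by
      rw [mem_cball, Complex.inv_re, map_inv₀, inv_eq_one_div]
      apply div_le_div_of_nonneg_right _ (Complex.normSq_nonneg _)
      simp; exact hs)
    have e : ((s + 1)⁻¹)⁻¹ - 1 = s := by rw [inv_inv]; ring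
    simpa [hat, h1, e] using hm
  · intro q hq
    have hc1 := hat_cont hA hAi hq.2
    have hc2 := hat_cont hB hBi hq.2
    have hc1' : ContinuousAt (fun q : ℝ × ℂ => hat A Ai q.2) q :=
      ContinuousAt.comp (f := fun q : ℝ × ℂ => q.2) hc1 continuousAt_snd
    have hc2' : ContinuousAt (fun q : ℝ × ℂ => hat B Bi q.2) q :=
      ContinuousAt.comp (f := fun q : ℝ × ℂ => q.2) hc2 continuousAt_snd
    apply ContinuousAt.continuousWithinAt
    have hd : Continuous fun m : Matrix (Fin n) (Fin n) ℂ => m.det := by fun_prop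
    have ht : ContinuousAt (fun q : ℝ × ℂ => (q.1 : ℂ)) q := by fun_prop
    have h3 : ContinuousAt (fun q : ℝ × ℂ =>
        1 - (X + (q.1 : ℂ) • (hat A Ai q.2 - X)) * hat B Bi q.2) q :=
      continuousAt_const.sub ((continuousAt_const.add (ht.smul (hc1'.sub continuousAt_const))).mul hc2')
    exact ContinuousAt.comp (g := fun m : Matrix (Fin n) (Fin n) ℂ => m.det) hd.continuousAt h3
  · intro t ht p hp
    have hp0 : p ≠ 0 := by
      rintro rfl
      rw [Metric.mem_ball, dist_eq_norm] at hp
      norm_num at hp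
    have hcb := Metric.ball_subset_closedBall hp
    have hre := re_of_cball hp0 hcb
    apply DifferentiableAt.differentiableWithinAt
    have hin : DifferentiableAt ℂ (fun q : ℂ => q⁻¹ - 1) p := by fun_prop (disch := exact hp0)
    have ent : ∀ (A : ℂ → Matrix (Fin n) (Fin n) ℂ) (Ai : Matrix (Fin n) (Fin n) ℂ),
      (∀ s : ℂ, 0 ≤ s.re → ∀ i j, DifferentiableAt ℂ (fun z => A z i j) s) →
      ∀ i j, DifferentiableAt ℂ (fun q => hat A Ai q i j) p := by
      intro A Ai hA i j
      have h1 : DifferentiableAt ℂ (fun q : ℂ => A (q⁻¹ - 1) i j) p :=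
        DifferentiableAt.comp (g := fun z => A z i j) (f := fun q : ℂ => q⁻¹ - 1) p (hA _ hre i j) hin
      refine h1.congr_of_eventuallyEq ?_
      filter_upwards [hat_ev A Ai hp0] with q hq
      rw [hq]
    have e1 := ent A Ai hA
    have e2 := ent B Bi hB
    apply det_diff
    intro i j
    simp only [Matrix.sub_apply, Matrix.mul_apply, Matrix.add_apply, Matrix.smul_apply, smul_eq_mul]
    refine (differentiableAt_const _).sub (DifferentiableAt.fun_sum fun k _ => ?_)
    exact ((differentiableAt_const _).add (((e1 i k).sub (differentiableAt_const _)).const_mul _)).mul (e2 k j)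
  · intro t ht p hp
    by_cases hp0 : p = 0
    · subst hp0
      simpa [hat] using hinf t ht
    · rw [mem_sph] at hp
      have hre : (p⁻¹ - 1).re = 0 := by
        rw [Complex.sub_re, Complex.inv_re, ← hp, div_self (Complex.normSq_pos.2 hp0).ne']
        simp
      have := hax t ht (p⁻¹ - 1).im
      rw [← eq_jw hre] at this
      simpa [hat, hp0] using this
  · intro p hp
    by_cases hp0 : p = 0
    · subst hp0
      have := hinf 0 (by simp)
      simpa [hat] using this
    · have := h0 _ (re_of_cball hp0 hp)
      simpa [hat, hp0] using this

lemma axis_ns (A B : Matrix (Fin n) (Fin n) ℂ) (ω : ℝ) (hA : ∀ y, ω * (qf A y).im ≤ 0)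
    (hB : ∀ y, ω * (qf B y).im ≤ 0)
    (h : (∀ y, y ≠ 0 → ω * (qf A y).im < 0) ∨ (∀ y, y ≠ 0 → ω * (qf B y).im < 0)) :
    (1 - A * B).det ≠ 0 := by
  intro hd
  obtain ⟨x, hx0, hx⟩ := Matrix.exists_mulVec_eq_zero_iff.2 hd
  obtain ⟨y, hy⟩ : ∃ y, y = B *ᵥ x := ⟨_, rfl⟩
  have hyx : A *ᵥ y = x := by
    rw [sub_mulVec, one_mulVec, ← mulVec_mulVec, ← hy] at hx
    exact (sub_eq_zero.1 hx).symm
  have hy0 : y ≠ 0 := by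
    rintro rfl
    rw [mulVec_zero] at hyx
    exact hx0 hyx.symm
  have e : (qf A y).im + (qf B x).im = 0 := by
    rw [qf, qf, hyx, ← hy, Matrix.star_dotProduct]
    simp
  have e2 : ω * (qf A y).im + ω * (qf B x).im = 0 := by rw [← mul_add, e, mul_zero]
  rcases h with h | h
  · linarith [h y hy0, hB x]
  · linarith [hA y, h x hx0]

/-- perturbed plant -/
def Pe (P : Matrix (Fin n) (Fin n) (RatFunc ℝ)) (ε : ℝ) (s : ℂ) : Matrix (Fin n) (Fin n) ℂ :=
  evalM P 0 - (s / (s + ε)) • (evalM P 0 - evalM P (s + ε))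

lemma Pe_zero (P : Matrix (Fin n) (Fin n) (RatFunc ℝ)) (ε : ℝ) : Pe P ε 0 = evalM P 0 := by
  simp [Pe]

lemma ne_zero_of_re {s : ℂ} (h : 0 < s.re) : s ≠ 0 := by
  rintro rfl; simp at h

lemma Pe_diff {P : Matrix (Fin n) (Fin n) (RatFunc ℝ)} (hP : IsNI P) {ε : ℝ} {s : ℂ}
    (hs : 0 < s.re + ε) (i j) : DifferentiableAt ℂ (fun z => Pe P ε z i j) s := by
  have hre : 0 < (s + (ε : ℂ)).re := by simpa using hs
  have h1 : DifferentiableAt ℂ (fun z : ℂ => evalM P (z + ε) i j) s :=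
    DifferentiableAt.comp (g := fun z => evalM P z i j) (f := fun z : ℂ => z + ε) s
      (evalM_diff_entry (hP.2.1 _ hre) i j) (by fun_prop)
  have h2 : DifferentiableAt ℂ (fun z : ℂ => z / (z + ε)) s := by
    fun_prop (disch := exact ne_zero_of_re hre)
  exact (differentiableAt_const _).sub (h2.mul ((differentiableAt_const _).sub h1))

lemma Pe_inf {P : Matrix (Fin n) (Fin n) (RatFunc ℝ)} (hP : IsNI P) (ε : ℝ) :
    Tendsto (Pe P ε) (Bornology.cobounded ℂ) (𝓝 ((evalInf P).map Complex.ofReal)) := by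
  have h2 : Tendsto (fun z : ℂ => z + ε) (Bornology.cobounded ℂ) (Bornology.cobounded ℂ) := by
    rw [← tendsto_norm_atTop_iff_cobounded]
    refine tendsto_atTop_mono (fun q => ?_)
      (tendsto_atTop_add_const_right _ (-‖(ε : ℂ)‖) (tendsto_norm_cobounded_atTop (E := ℂ)))
    have := norm_sub_norm_le q (-(ε : ℂ))
    rw [norm_neg, sub_neg_eq_add] at this
    linarith
  have h1 : Tendsto (fun z : ℂ => z / (z + ε)) (Bornology.cobounded ℂ) (𝓝 1) := by
    have h3 : Tendsto (fun z : ℂ => 1 - ε * (z + ε)⁻¹) (Bornology.cobounded ℂ) (𝓝 (1 - ε * 0)) :=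
      tendsto_const_nhds.sub ((tendsto_inv₀_cobounded.comp h2).const_mul _)
    rw [mul_zero, sub_zero] at h3
    refine h3.congr' ?_
    have hne : ∀ᶠ z : ℂ in Bornology.cobounded ℂ, z + ε ≠ 0 :=
      h2.eventually (Bornology.eventually_ne_cobounded 0)
    filter_upwards [hne] with z hz
    field_simp
    ring
  have h4 := (evalM_tendsto_inf hP.1).comp h2
  have h5 : Tendsto (Pe P ε) (Bornology.cobounded ℂ)
      (𝓝 (evalM P 0 - (1 : ℂ) • (evalM P 0 - (evalInf P).map Complex.ofReal))) :=
    tendsto_const_nhds.sub (h1.smul (tendsto_const_nhds.sub h4))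
  simpa using h5

lemma Pe_im {P : Matrix (Fin n) (Fin n) (RatFunc ℝ)} (hP : IsNI P) (h0 : ¬ HasPole P 0) {ε : ℝ}
    (hε : 0 < ε) (ω : ℝ) (v : Fin n → ℂ) : ω * (qf (Pe P ε (jw ω)) v).im ≤ 0 := by
  have h1 := ni_scalar hP h0 v (jw ω + ε) (by simpa [jw_re] using hε)
  have h2 : (qf (evalM P 0) v).im = 0 := by
    rw [← evalR_map]; exact qf_real_im (ni_symm0 hP h0) v
  obtain ⟨K, hK⟩ : ∃ K, K = (qf (evalM P 0) v - qf (evalM P (jw ω + ε)) v) / (jw ω + ε) := ⟨_, rfl⟩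
  rw [← hK] at h1
  have h3 : qf (Pe P ε (jw ω)) v = qf (evalM P 0) v - jw ω * K := by
    rw [Pe, qf_sub, qf_smul, qf_sub, hK]
    ring
  rw [h3, Complex.sub_im, h2]
  simp [jw]
  nlinarith [mul_nonneg (mul_self_nonneg ω) h1]

lemma suff_eps {P C : Matrix (Fin n) (Fin n) (RatFunc ℝ)}
    (hP : IsNI P) (hP0 : ¬ HasPole P 0) (hC : IsSNI C)
    (ha : (1 - evalInf P * evalInf C).det ≠ 0)
    (hb : ∀ t ∈ Set.Icc (0:ℝ) 1, (1 - evalInf P * (evalInf C + t • (evalR C 0 - evalInf C))).det ≠ 0)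
    (hc : ∀ t ∈ Set.Icc (0:ℝ) 1, (1 - evalR C 0 * (evalInf P + t • (evalR P 0 - evalInf P))).det ≠ 0)
    {ε : ℝ} (hε : 0 < ε) : ∀ s : ℂ, 0 ≤ s.re → (1 - Pe P ε s * evalM C s).det ≠ 0 := by
  have hCN := sni_ni hC
  have hC0 : ¬ HasPole C 0 := sni_nopole hC (by simp)
  obtain ⟨Pi, hPi⟩ : ∃ Pi, Pi = (evalInf P).map Complex.ofReal := ⟨_, rfl⟩
  obtain ⟨Ci, hCi⟩ : ∃ Ci, Ci = (evalInf C).map Complex.ofReal := ⟨_, rfl⟩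
  have ha' : (1 - Pi * Ci).det ≠ 0 := by
    rw [hPi, hCi, ← map_ofReal_mul, ← map_ofReal_one, ← map_ofReal_sub, map_ofReal_det]
    exact_mod_cast ha
  have hb' : ∀ t ∈ Set.Icc (0:ℝ) 1, (1 - (Ci + (t:ℂ) • (evalM C 0 - Ci)) * Pi).det ≠ 0 := by
    intro t ht
    rw [Matrix.det_one_sub_mul_comm, hPi, hCi, ← evalR_map, ← map_ofReal_sub, ← map_ofReal_smul,
      ← map_ofReal_add, ← map_ofReal_mul, ← map_ofReal_one, ← map_ofReal_sub, map_ofReal_det]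
    exact_mod_cast hb t ht
  have hc' : ∀ t ∈ Set.Icc (0:ℝ) 1, (1 - (Pi + (t:ℂ) • (evalM P 0 - Pi)) * evalM C 0).det ≠ 0 := by
    intro t ht
    rw [Matrix.det_one_sub_mul_comm, hPi, ← evalR_map, ← evalR_map, ← map_ofReal_sub, ← map_ofReal_smul,
      ← map_ofReal_add, ← map_ofReal_mul, ← map_ofReal_one, ← map_ofReal_sub, map_ofReal_det]
    exact_mod_cast hc t ht
  have iP : ∀ v, (qf Pi v).im = 0 := by rw [hPi]; exact qf_real_im (ni_symm_inf hP)
  have iC : ∀ v, (qf Ci v).im = 0 := by rw [hCi]; exact qf_real_im (ni_symm_inf hCN)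
  have iconv : ∀ (X A : Matrix (Fin n) (Fin n) ℂ) (t : ℝ) (v), (qf X v).im = 0 →
      (qf (X + (t:ℂ) • (A - X)) v).im = t * (qf A v).im := by
    intro X A t v h
    rw [qf_add, qf_smul, qf_sub]
    simp [h]
  have dC : ∀ s : ℂ, 0 ≤ s.re → ∀ i j, DifferentiableAt ℂ (fun z => evalM C z i j) s :=
    fun s hs i j => evalM_diff_entry (sni_nopole hC hs) i j
  have tC : Tendsto (evalM C) (Bornology.cobounded ℂ) (𝓝 Ci) := by
    rw [hCi]; exact evalM_tendsto_inf hC.1.1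
  have tP : Tendsto (Pe P ε) (Bornology.cobounded ℂ) (𝓝 Pi) := by
    rw [hPi]; exact Pe_inf hP ε
  have leg1 : ∀ s : ℂ, 0 ≤ s.re → (1 - evalM C s * Pi).det ≠ 0 := by
    refine leg (A := evalM C) (B := fun _ => Pi) (X := Ci) (Ai := Ci) (Bi := Pi) dC
      (fun s _ i j => differentiableAt_const _) tC tendsto_const_nhds ?_ ?_ ?_
    · intro t ht
      rw [sub_self, smul_zero, add_zero, Matrix.det_one_sub_mul_comm]
      exact ha'
    · intro t ht ω
      by_cases hω : ω = 0
      · rw [hω, jw_zero]; exact hb' t ht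
      · rcases ht.1.eq_or_lt with h | h
        · rw [← h, Complex.ofReal_zero, zero_smul, add_zero, Matrix.det_one_sub_mul_comm]
          exact ha'
        · have hneg : ∀ y, y ≠ 0 → ω * (qf (Ci + (t:ℂ) • (evalM C (jw ω) - Ci)) y).im < 0 := by
            intro y hy
            rw [iconv _ _ _ _ (iC y)]
            have := sni_im hC ω hω hy
            nlinarith
          apply axis_ns _ _ ω
          · intro y
            rw [iconv _ _ _ _ (iC y)]
            have := ni_im hCN ω (sni_nopole hC (by simp [jw_re])) y
            nlinarith
          · intro y; simp [iP y]
          · left; exact hneg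
    · intro s _
      rw [Matrix.det_one_sub_mul_comm]
      exact ha'
  refine leg (A := Pe P ε) (B := evalM C) (X := Pi) (Ai := Pi) (Bi := Ci)
    (fun s hs i j => Pe_diff hP (by linarith) i j) dC tP tC ?_ ?_ ?_
  · intro t ht
    rw [sub_self, smul_zero, add_zero]
    exact ha'
  · intro t ht ω
    by_cases hω : ω = 0
    · rw [hω, jw_zero, Pe_zero]; exact hc' t ht
    · apply axis_ns _ _ ω
      · intro y
        rw [iconv _ _ _ _ (iP y)]
        have := Pe_im hP hP0 hε ω y
        nlinarith [ht.1]
      · intro y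
        exact ni_im hCN ω (sni_nopole hC (by simp [jw_re])) y
      · right
        intro y hy
        exact sni_im hC ω hω hy
  · intro s hs
    rw [Matrix.det_one_sub_mul_comm]
    exact leg1 s hs

lemma inv_tendsto {α : Type*} {l : Filter α} {M : α → Matrix (Fin n) (Fin n) ℂ}
    {L : Matrix (Fin n) (Fin n) ℂ} (h : Tendsto M l (𝓝 L)) (hL : L.det ≠ 0) :
    Tendsto (fun a => (M a)⁻¹) l (𝓝 L⁻¹) := by
  simp only [Matrix.inv_def, Ring.inverse_eq_inv']
  have h1 : Tendsto (fun a => (M a).det) l (𝓝 L.det) :=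
    ((by fun_prop : Continuous fun m : Matrix (Fin n) (Fin n) ℂ => m.det).tendsto L).comp h
  have h2 : Tendsto (fun a => (M a).adjugate) l (𝓝 L.adjugate) :=
    ((by fun_prop : Continuous fun m : Matrix (Fin n) (Fin n) ℂ => m.adjugate).tendsto L).comp h
  exact (h1.inv₀ hL).smul h2

/-- basic evaluation facts for the sensitivity function -/
lemma V_eval {P C V : Matrix (Fin n) (Fin n) (RatFunc ℝ)} (hV : V * (1 - P * C) = 1) {s : ℂ}
    (h1 : ¬ HasPole P s) (h2 : ¬ HasPole C s) (h3 : ¬ HasPole V s) :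
    evalM V s * (1 - evalM P s * evalM C s) = 1 := by
  have a1 := evalM_mul h1 h2
  have a2 := evalM_one_sub a1.1
  rw [← a1.2, ← a2.2]
  exact eval_inv hV a2.1 h3

lemma det_ratfunc_ne {P C : Matrix (Fin n) (Fin n) (RatFunc ℝ)} (hP : Proper P) (hC : Proper C)
    (ha : (1 - evalInf P * evalInf C).det ≠ 0) : (1 - P * C).det ≠ 0 := by
  intro h
  have h1 := proper_mul hP hC
  have h2 := proper_one_sub h1.1
  rw [← h1.2, ← h2.2] at ha
  have ht : Tendsto (fun x : ℝ => (evalM (1 - P * C) x).det) atTop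
      (𝓝 ((evalInf (1 - P * C)).map Complex.ofReal).det) :=
    ((by fun_prop : Continuous fun m : Matrix (Fin n) (Fin n) ℂ => m.det).tendsto _).comp
      (tendsto_real h2.1)
  have ht2 : Tendsto (fun x : ℝ => (evalM (1 - P * C) x).det) atTop (𝓝 0) := by
    refine tendsto_const_nhds.congr' ?_
    filter_upwards [ev_not_pole_real (1 - P * C)] with x hx
    rw [← evalC_det hx, h]
    simp [evalC]
  have := tendsto_nhds_unique ht ht2
  rw [map_ofReal_det] at this
  exact ha (by exact_mod_cast this)

lemma suff_rhp {P C V : Matrix (Fin n) (Fin n) (RatFunc ℝ)}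
    (hP : IsNI P) (hC : IsSNI C) (hV : V * (1 - P * C) = 1)
    (he : ∀ ε : ℝ, 0 < ε → ∀ s : ℂ, 0 ≤ s.re → (1 - Pe P ε s * evalM C s).det ≠ 0)
    (s0 : ℂ) (hs0 : 0 < s0.re) : (1 - evalM P s0 * evalM C s0).det ≠ 0 := by
  have hev : ∀ᶠ s in 𝓝[≠] s0, (1 - evalM P s * evalM C s).det ≠ 0 := by
    filter_upwards [ev_not_pole P s0, ev_not_pole C s0, ev_not_pole V s0] with s h1 h2 h3 h4
    have := congrArg det (V_eval hV h1 h2 h3)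
    rw [det_mul, h4, mul_zero, det_one] at this
    exact zero_ne_one this
  obtain ⟨r, hr, hr1, hr2⟩ : ∃ r > 0, (∀ z ∈ Metric.closedBall s0 r, 0 < z.re) ∧
      ∀ z ∈ Metric.sphere s0 r, (1 - evalM P z * evalM C z).det ≠ 0 := by
    rw [eventually_nhdsWithin_iff, Metric.eventually_nhds_iff] at hev
    obtain ⟨δ, hδ, hδ2⟩ := hev
    have hm : 0 < min (δ / 2) (s0.re / 2) := by positivity
    refine ⟨min (δ / 2) (s0.re / 2), hm, ?_, ?_⟩
    · intro z hz
      rw [Metric.mem_closedBall, dist_eq_norm] at hz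
      have h1 := Complex.abs_re_le_norm (z - s0)
      have h2 := min_le_right (δ / 2) (s0.re / 2)
      rw [Complex.sub_re] at h1
      have := (abs_le.1 (h1.trans (hz.trans h2))).1
      linarith
    · intro z hz
      rw [Metric.mem_sphere] at hz
      apply hδ2
      · rw [hz]
        have := min_le_left (δ / 2) (s0.re / 2)
        linarith
      · simp only [Set.mem_compl_iff, Set.mem_singleton_iff]
        rintro rfl
        rw [dist_self] at hz
        linarith
  have Pe0 : ∀ z : ℂ, 0 < z.re → Pe P 0 z = evalM P z := by
    intro z hz
    simp [Pe, div_self (ne_zero_of_re hz)]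
  have main := homotopy_ball s0 r hr (fun t z => (1 - Pe P (1 - t) z * evalM C z).det) ?_ ?_ ?_ ?_
  · have := main s0 (by simp [hr.le])
    simp only [sub_self] at this
    rwa [Pe0 s0 hs0] at this
  · intro q hq
    obtain ⟨hq1, hq2⟩ := hq
    have hre := hr1 _ hq2
    apply ContinuousAt.continuousWithinAt
    have hre2 : 0 < (q.2 + ((1 - q.1 : ℝ) : ℂ)).re := by
      rw [Complex.add_re, Complex.ofReal_re]; linarith [hq1.2]
    have c1 : ContinuousAt (fun q : ℝ × ℂ => q.2 + ((1 - q.1 : ℝ) : ℂ)) q := by fun_prop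
    have c2 : ContinuousAt (fun q : ℝ × ℂ => evalM P (q.2 + ((1 - q.1 : ℝ) : ℂ))) q :=
      ContinuousAt.comp (g := evalM P) (f := fun q : ℝ × ℂ => q.2 + ((1 - q.1 : ℝ) : ℂ))
        (evalM_continuousAt (hP.2.1 _ hre2)) c1
    have c3 : ContinuousAt (fun q : ℝ × ℂ => q.2 / (q.2 + ((1 - q.1 : ℝ) : ℂ))) q :=
      continuousAt_snd.div c1 (ne_zero_of_re hre2)
    have c4 : ContinuousAt (fun q : ℝ × ℂ => evalM C q.2) q :=
      ContinuousAt.comp (g := evalM C) (f := fun q : ℝ × ℂ => q.2)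
        (evalM_continuousAt (sni_nopole hC hre.le)) continuousAt_snd
    have c5 : ContinuousAt (fun q : ℝ × ℂ => 1 - Pe P (1 - q.1) q.2 * evalM C q.2) q :=
      continuousAt_const.sub ((continuousAt_const.sub (c3.smul (continuousAt_const.sub c2))).mul c4)
    have hd : Continuous fun m : Matrix (Fin n) (Fin n) ℂ => m.det := by fun_prop
    exact ContinuousAt.comp (g := fun m : Matrix (Fin n) (Fin n) ℂ => m.det) hd.continuousAt c5
  · intro t ht z hz
    have hre := hr1 _ (Metric.ball_subset_closedBall hz)
    apply DifferentiableAt.differentiableWithinAt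
    apply det_diff
    intro i j
    simp only [Matrix.sub_apply, Matrix.mul_apply]
    refine (differentiableAt_const _).sub (DifferentiableAt.fun_sum fun k _ => ?_)
    exact (Pe_diff hP (by linarith [ht.2]) i k).mul (evalM_diff_entry (sni_nopole hC hre.le) k j)
  · intro t ht z hz
    have hre := hr1 _ (Metric.sphere_subset_closedBall hz)
    rcases ht.2.eq_or_lt with h | h
    · subst h
      simp only [sub_self]
      rw [Pe0 z hre]
      exact hr2 z hz
    · exact he (1 - t) (by linarith) z hre.le
  · intro z hz
    exact he (1 - 0) (by norm_num) z (hr1 z hz).le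

/-- no pole of V where things are regular -/
lemma V_reg {P C V : Matrix (Fin n) (Fin n) (RatFunc ℝ)} (hV : V * (1 - P * C) = 1) {s : ℂ}
    (h1 : ¬ HasPole P s) (h2 : ¬ HasPole C s) (hd : (1 - evalM P s * evalM C s).det ≠ 0) :
    ¬ HasPole V s := by
  rintro ⟨i, j, hij⟩
  have hc : Tendsto (fun z => 1 - evalM P z * evalM C z) (𝓝[≠] s) (𝓝 (1 - evalM P s * evalM C s)) :=
    (tendsto_const_nhds.sub ((evalM_continuousAt h1).mul (evalM_continuousAt h2))).mono_left
      nhdsWithin_le_nhds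
  have ht := inv_tendsto hc hd
  have h3 := (tendsto_pi_nhds.1 (tendsto_pi_nhds.1 ht i) j).norm
  refine not_pole_of_bdd (f := V i j) (a := s) le_rfl
    (‖(1 - evalM P s * evalM C s)⁻¹ i j‖ + 1) ?_ hij
  filter_upwards [h3.eventually (gt_mem_nhds (lt_add_one _)), ev_not_pole P s, ev_not_pole C s,
    ev_not_pole V s] with z a1 a2 a3 a4
  have := Matrix.inv_eq_left_inv (V_eval hV a2 a3 a4)
  rw [this] at a1
  exact a1.le

lemma dot_bound (a b : Fin n → ℂ) : ‖star a ⬝ᵥ b‖ ≤ n * (‖a‖ * ‖b‖) := by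
  unfold dotProduct
  refine (norm_sum_le _ _).trans ?_
  have : ∀ i ∈ Finset.univ, ‖star a i * b i‖ ≤ ‖a‖ * ‖b‖ := by
    intro i _
    rw [norm_mul, Pi.star_apply, norm_star]
    exact mul_le_mul (norm_le_pi_norm a i) (norm_le_pi_norm b i) (norm_nonneg _) (norm_nonneg _)
  refine (Finset.sum_le_card_nsmul _ _ _ this).trans ?_
  simp

lemma unif_pos {C : Matrix (Fin n) (Fin n) (RatFunc ℝ)} (hC : IsSNI C) {ω0 : ℝ} (h0 : 0 < ω0) :
    ∃ c > 0, ∃ κ ≥ 0, ∀ ω ∈ Set.Icc (ω0 / 2) (2 * ω0), ∀ x : Fin n → ℂ,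
      c * ‖x‖ ^ 2 ≤ -(qf (evalM C (jw ω)) x).im ∧ ‖evalM C (jw ω) *ᵥ x‖ ≤ κ * ‖x‖ := by
  have hK : IsCompact (Set.Icc (ω0 / 2) (2 * ω0) ×ˢ Metric.sphere (0 : Fin n → ℂ) 1) :=
    isCompact_Icc.prod (isCompact_sphere _ _)
  have hcC : Continuous fun ω : ℝ => evalM C (jw ω) := by
    rw [continuous_iff_continuousAt]
    intro ω
    exact ContinuousAt.comp (g := evalM C) (f := jw)
      (evalM_continuousAt (sni_nopole hC (by simp [jw_re]))) continuous_jw.continuousAt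
  have hc1 : Continuous fun q : ℝ × (Fin n → ℂ) => evalM C (jw q.1) *ᵥ q.2 :=
    (hcC.comp continuous_fst).matrix_mulVec continuous_snd
  have hc2 : Continuous fun q : ℝ × (Fin n → ℂ) => -(qf (evalM C (jw q.1)) q.2).im :=
    (Complex.continuous_im.comp (Continuous.dotProduct (continuous_snd.star) hc1)).neg
  obtain ⟨c, hc, hcb⟩ := hK.exists_forall_le' (a := 0) hc2.continuousOn (by
    rintro ⟨ω, x⟩ ⟨hω, hx⟩
    have hx0 : x ≠ 0 := by
      rintro rfl
      simp at hx
    have := qf_im_neg (hC.2 ω (by simp only [Set.mem_Icc] at hω; linarith [hω.1])) hx0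
    simpa using this)
  obtain ⟨κ, hκ⟩ := hK.exists_bound_of_continuousOn hc1.continuousOn
  refine ⟨c, hc, max κ 0, le_max_right _ _, ?_⟩
  intro ω hω x
  by_cases hx : x = 0
  · subst hx; simp [qf]
  have hn : 0 < ‖x‖ := norm_pos_iff.2 hx
  have hn' : ((‖x‖ : ℝ) : ℂ) ≠ 0 := by exact_mod_cast hn.ne'
  obtain ⟨u, hu⟩ : ∃ u : Fin n → ℂ, u = ((‖x‖ : ℝ) : ℂ)⁻¹ • x := ⟨_, rfl⟩
  have hxu : x = ((‖x‖ : ℝ) : ℂ) • u := by rw [hu, smul_smul, mul_inv_cancel₀ hn', one_smul]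
  have hus : u ∈ Metric.sphere (0 : Fin n → ℂ) 1 := by
    rw [mem_sphere_zero_iff_norm, hu, norm_smul, norm_inv, Complex.norm_real, norm_norm,
      inv_mul_cancel₀ hn.ne']
  have a1 := hcb (ω, u) ⟨hω, hus⟩
  have a2 := hκ (ω, u) ⟨hω, hus⟩
  simp only at a1 a2
  constructor
  · have e : qf (evalM C (jw ω)) x = ((‖x‖ ^ 2 : ℝ) : ℂ) * qf (evalM C (jw ω)) u := by
      conv_lhs => rw [hxu]
      rw [qf, mulVec_smul, star_smul, smul_dotProduct, dotProduct_smul, qf]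
      simp
      ring
    rw [e, Complex.im_ofReal_mul]
    nlinarith [sq_nonneg ‖x‖]
  · conv_lhs => rw [hxu, mulVec_smul, norm_smul, Complex.norm_real, norm_norm]
    rw [mul_comm]
    exact mul_le_mul_of_nonneg_right (a2.trans (le_max_left _ _)) hn.le

lemma sol_bound {P C V : Matrix (Fin n) (Fin n) ℂ} (hV : V * (1 - P * C) = 1)
    (hP : ∀ y, (qf P y).im ≤ 0) {c κ : ℝ} (hc : 0 < c) (hκ : 0 ≤ κ)
    (hC : ∀ x, c * ‖x‖ ^ 2 ≤ -(qf C x).im ∧ ‖C *ᵥ x‖ ≤ κ * ‖x‖) (r1 r2 : Fin n → ℂ)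
    (h1 : ‖r1‖ ≤ 1) (h2 : ‖r2‖ ≤ 1) :
    ‖V *ᵥ (r1 + P *ᵥ r2)‖ ≤ max 1 ((n * (κ + 1) + n) / c) := by
  have hV' : (1 - P * C) * V = 1 := mul_eq_one_comm.1 hV
  obtain ⟨x, hx⟩ : ∃ x, x = V *ᵥ (r1 + P *ᵥ r2) := ⟨_, rfl⟩
  obtain ⟨y, hy⟩ : ∃ y, y = C *ᵥ x + r2 := ⟨_, rfl⟩
  rw [← hx]
  have e1 : P *ᵥ y = x - r1 := by
    have : (1 - P * C) *ᵥ x = r1 + P *ᵥ r2 := by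
      rw [hx, mulVec_mulVec, hV', one_mulVec]
    rw [sub_mulVec, one_mulVec, ← mulVec_mulVec] at this
    have h4 : P *ᵥ (C *ᵥ x) = x - (x - P *ᵥ (C *ᵥ x)) := by abel
    rw [hy, mulVec_add, h4, this]
    abel
  have e2 : C *ᵥ x = y - r2 := by rw [hy]; abel
  have e3 : (qf P y).im + (qf C x).im = -(star y ⬝ᵥ r1).im - (star x ⬝ᵥ r2).im := by
    rw [qf, qf, e1, e2, dotProduct_sub, dotProduct_sub, Matrix.star_dotProduct y x]
    simp
    ring
  have b1 := (hC x).1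
  have b2 : ‖y‖ ≤ κ * ‖x‖ + 1 := by
    rw [hy]
    exact (norm_add_le _ _).trans (add_le_add (hC x).2 h2)
  have b3 := (Complex.abs_im_le_norm _).trans (dot_bound y r1)
  have b4 := (Complex.abs_im_le_norm _).trans (dot_bound x r2)
  have b5 := (le_abs_self _).trans b3
  have b6 := (le_abs_self _).trans b4
  have hn : (0:ℝ) ≤ n := Nat.cast_nonneg n
  have b7 : (n:ℝ) * (‖y‖ * ‖r1‖) ≤ n * (κ * ‖x‖ + 1) := by
    apply mul_le_mul_of_nonneg_left _ hn
    nlinarith [norm_nonneg y, norm_nonneg r1]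
  have b8 : (n:ℝ) * (‖x‖ * ‖r2‖) ≤ n * ‖x‖ := by
    apply mul_le_mul_of_nonneg_left _ hn
    nlinarith [norm_nonneg x, norm_nonneg r2]
  have b9 := hP y
  have b10 : c * ‖x‖ ^ 2 ≤ n * (κ * ‖x‖ + 1) + n * ‖x‖ := by linarith
  by_cases hx1 : ‖x‖ ≤ 1
  · exact hx1.trans (le_max_left _ _)
  · push Not at hx1
    apply le_trans _ (le_max_right _ _)
    rw [le_div_iff₀ hc]
    have b11 : c * ‖x‖ ^ 2 ≤ (n * (κ + 1) + n) * ‖x‖ := by nlinarith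
    nlinarith

lemma axis_reg {P C V : Matrix (Fin n) (Fin n) (RatFunc ℝ)} (hP : IsNI P) (hC : IsSNI C)
    (hV : V * (1 - P * C) = 1) {ω0 : ℝ} (h0 : 0 < ω0) :
    ¬ HasPole V (jw ω0) ∧ ¬ HasPole (V * P) (jw ω0) := by
  obtain ⟨c, hc, κ, hκ, hb⟩ := unif_pos hC h0
  have hl : Tendsto jw (𝓝[≠] ω0) (𝓝[≠] (jw ω0)) := by
    apply tendsto_nhdsWithin_of_tendsto_nhds_of_eventually_within
    · exact continuous_jw.continuousAt.tendsto.mono_left nhdsWithin_le_nhds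
    · filter_upwards [self_mem_nhdsWithin] with x hx
      simp only [Set.mem_compl_iff, Set.mem_singleton_iff] at hx ⊢
      intro h
      apply hx
      have := congrArg Complex.im h
      simpa [jw] using this
  have hmem : ∀ᶠ ω in 𝓝[≠] ω0, ω ∈ Set.Icc (ω0 / 2) (2 * ω0) :=
    nhdsWithin_le_nhds (Icc_mem_nhds (by linarith) (by linarith))
  have main : ∀ᶠ ω in 𝓝[≠] ω0, evalM (V * P) (jw ω) = evalM V (jw ω) * evalM P (jw ω) ∧
      ∀ r1 r2 : Fin n → ℂ, ‖r1‖ ≤ 1 → ‖r2‖ ≤ 1 →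
      ‖evalM V (jw ω) *ᵥ (r1 + evalM P (jw ω) *ᵥ r2)‖ ≤ max 1 ((n * (κ + 1) + n) / c) := by
    filter_upwards [hl.eventually (ev_not_pole P _), hl.eventually (ev_not_pole V _), hmem]
      with ω h1 h2 h3
    have hω : 0 < ω := by linarith [h3.1]
    refine ⟨(evalM_mul h2 h1).2, ?_⟩
    intro r1 r2 hr1 hr2
    exact sol_bound (V_eval hV h1 (sni_nopole hC (by simp [jw_re])) h2)
      (fun y => qf_im_nonpos (hP.2.2.1 ω hω h1) y) hc hκ (hb ω h3) r1 r2 hr1 hr2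
  have hsing : ∀ j : Fin n, ‖(Pi.single j 1 : Fin n → ℂ)‖ ≤ 1 := by
    intro j
    rw [Pi.norm_single]; simp
  constructor
  · rintro ⟨i, j, hij⟩
    refine not_pole_of_bdd (f := V i j) (a := jw ω0) (l := map jw (𝓝[≠] ω0)) hl
      (max 1 ((n * (κ + 1) + n) / c)) ?_ hij
    rw [eventually_map]
    filter_upwards [main] with ω hω
    have := hω.2 (Pi.single j 1) 0 (hsing j) (by simp)
    rw [mulVec_zero, add_zero] at this
    have h2 := (norm_le_pi_norm _ i).trans this
    simpa [evalM] using h2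
  · rintro ⟨i, j, hij⟩
    refine not_pole_of_bdd (f := (V * P) i j) (a := jw ω0) (l := map jw (𝓝[≠] ω0)) hl
      (max 1 ((n * (κ + 1) + n) / c)) ?_ hij
    rw [eventually_map]
    filter_upwards [main] with ω hω
    have := hω.2 0 (Pi.single j 1) (by simp) (hsing j)
    rw [zero_add, mulVec_mulVec, ← hω.1] at this
    have h2 := (norm_le_pi_norm _ i).trans this
    simpa [evalM] using h2

lemma sufficiency (P C : Matrix (Fin n) (Fin n) (RatFunc ℝ))
    (hP : IsNI P) (hP0 : ¬ HasPole P 0) (hC : IsSNI C)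
    (ha : (1 - evalInf P * evalInf C).det ≠ 0)
    (hb : maxEigLT ((1 - evalInf P * evalInf C)⁻¹ * (evalInf P * evalR C 0 - 1)) 0)
    (hc : maxEigLT ((1 - evalR C 0 * evalInf P)⁻¹ * (evalR C 0 * evalR P 0 - 1)) 0) :
    FeedbackStable P C := by
  have hb' := eig_suff _ _ _ ha hb
  have hd1 : (1 - evalR C 0 * evalInf P).det ≠ 0 := by
    have := hb' 1 (by simp)
    rw [Matrix.det_one_sub_mul_comm] at this
    simpa using this
  have hc' := eig_suff _ _ _ hd1 hc
  have he := fun ε (hε : (0:ℝ) < ε) => suff_eps hP hP0 hC ha hb' hc' hε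
  have hCp : Proper C := hC.1.1
  have hdet := det_ratfunc_ne hP.1 hCp ha
  refine ⟨hdet, ?_⟩
  obtain ⟨V, hVd⟩ : ∃ V, V = (1 - P * C)⁻¹ := ⟨_, rfl⟩
  have hV : V * (1 - P * C) = 1 := by
    rw [hVd]; exact Matrix.nonsing_inv_mul _ (isUnit_iff_ne_zero.2 hdet)
  rw [← hVd, mul_assoc C V P, memRHinf_blocks]
  have hprop : Proper V := by
    have h1 := proper_mul hP.1 hCp
    have h2 := proper_one_sub h1.1
    have ht := inv_tendsto (tendsto_real h2.1) (by
      rw [h2.2, h1.2, map_ofReal_det]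
      exact_mod_cast ha)
    refine (proper_of_tendsto (ht.congr' ?_)).1
    filter_upwards [ev_not_pole_real (1 - P * C), ev_not_pole_real V] with x a1 a2
    exact Matrix.inv_eq_left_inv (eval_inv hV a1 a2)
  have hreg : ∀ s : ℂ, 0 ≤ s.re → ¬ HasPole V s ∧ ¬ HasPole (V * P) s := by
    intro s hs
    have hCs := sni_nopole hC hs
    rcases hs.lt_or_eq with h | h
    · have h1 := hP.2.1 s h
      have h2 := V_reg hV h1 hCs (suff_rhp hP hC hV he s h)
      exact ⟨h2, (evalM_mul h2 h1).1⟩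
    · have e := eq_jw h.symm
      rcases lt_trichotomy s.im 0 with h1 | h1 | h1
      · have h2 := axis_reg hP hC hV (ω0 := -s.im) (by linarith)
        rw [jw_neg, ← e, hasPole_conj, hasPole_conj] at h2
        exact h2
      · rw [h1, jw_zero] at e
        subst e
        have h2 := V_reg hV hP0 hCs (by
          have := he 1 one_pos 0 (by simp)
          rwa [Pe_zero] at this)
        exact ⟨h2, (evalM_mul h2 hP0).1⟩
      · have h2 := axis_reg hP hC hV h1
        rwa [← e] at h2
  simp only [memRHinf_iff]
  have p1 := (proper_mul hprop hP.1).1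
  refine ⟨⟨hprop, fun s hs => (hreg s hs).1⟩, ⟨p1, fun s hs => (hreg s hs).2⟩,
    ⟨(proper_mul hCp hprop).1, fun s hs => (evalM_mul (sni_nopole hC hs) (hreg s hs).1).1⟩,
    ⟨(proper_mul hCp p1).1, fun s hs => (evalM_mul (sni_nopole hC hs) (hreg s hs).2).1⟩⟩

/-- feedback stability of an NI plant (no origin poles) with an
SNI controller, first set of necessary and sufficient conditions. -/
theorem feedback_stability_iff_v1 {n : ℕ} (P C : Matrix (Fin n) (Fin n) (RatFunc ℝ))
    (hP : IsNI P) (hP0 : ¬ HasPole P 0) (hC : IsSNI C) :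
    FeedbackStable P C ↔
      ((1 - evalInf P * evalInf C).det ≠ 0 ∧
       maxEigLT ((1 - evalInf P * evalInf C)⁻¹ * (evalInf P * evalR C 0 - 1)) 0 ∧
       maxEigLT ((1 - evalR C 0 * evalInf P)⁻¹ * (evalR C 0 * evalR P 0 - 1)) 0) := by
  exact ⟨necessity P C hP hP0 hC, fun h => sufficiency P C hP hP0 hC h.1 h.2.1 h.2.2⟩

end NIControl
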